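/- arXiv:0709.2638 — 2 statements merged into one kernel-verified Lean document; each statement's English description precedes it below -/
import Mathlib

section
/- Let u be a non-degenerate 3iet word with parameters ε, l, c, where ε is a Sturm number with ε′ < 0, and c = p₁ + q₁ε, l = p₂ + q₂ε for some rationals p₁, q₁, p₂, q₂ (and l ∉ ℤ[ε]). Then u is a fixed point of some primitive substitution over {1,2,3} if and only if there exists Λ = p + qε (p, q ∈ ℚ) with conjugate Λ′ = p + qε′ such that Λ > 1, Λ′ ∈ (0,1), Λ·Λ′ ∈ {1, −1}, Λ + Λ′ ∈ ℤ, and: (C1) Λ·ℤ[ε] = ℤ[ε]; (C2) with J := [Λ′c, Λ′(c+l)), both points c+ε and c+l−(1−ε) possess an ancestor in J, and these ancestors belong to the set {Λ′c, Λ′(c+ε), Λ′(c+l−(1−ε))}. -/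
/-- The set `ℤ[ε] = {a + bε : a, b ∈ ℤ}`. -/
def Zbr (ε : ℝ) : Set ℝ := {x | ∃ a b : ℤ, x = (a : ℝ) + (b : ℝ) * ε}

/-- The exchange of three intervals on `[c, c+l)` with parameters `ε, l, c`. -/
noncomputable def T3 (ε l c : ℝ) (x : ℝ) : ℝ :=
  if x < c + l - 1 + ε then x + 1 - ε
  else if x < c + ε then x + 1 - 2 * ε
  else x - ε

/-- The letter (1, 2 or 3, coded as 0, 1, 2 in `Fin 3`) coding the position of `x`. -/
noncomputable def letter3 (ε l c : ℝ) (x : ℝ) : Fin 3 :=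
  if x < c + l - 1 + ε then 0 else if x < c + ε then 1 else 2

/-- `u : ℤ → Fin 3` is the 3iet word with parameters `ε, l, c`, coding the orbit of `0`. -/
def IsThreeIetWord (ε l c : ℝ) (u : ℤ → Fin 3) : Prop :=
  ∃ t : ℤ → ℝ, t 0 = 0 ∧ (∀ n, t n ∈ Set.Ico c (c + l)) ∧
    (∀ n, t (n + 1) = T3 ε l c (t n)) ∧ ∀ n, u n = letter3 ε l c (t n)

/-- The extension of a substitution `φ` to finite words, by concatenation. -/
def substWord {A : Type*} (φ : A → List A) (w : List A) : List A := w.flatMap φ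

/-- A substitution is primitive if some power of it maps every letter to a word
containing all letters. -/
def IsPrimitiveSubst {A : Type*} (φ : A → List A) : Prop :=
  ∃ n : ℕ, 1 ≤ n ∧ ∀ a b : A, b ∈ (substWord φ)^[n] [a]

/-- A pointed bidirectional word `u : ℤ → A` is a fixed point of the substitution `φ`. -/
def IsFixedPointSubstZ {A : Type*} (φ : A → List A) (u : ℤ → A) : Prop :=
  ∃ k : ℤ → ℤ, StrictMono k ∧ k 0 = 0 ∧
    (∀ n, k (n + 1) = k n + (φ (u n)).length) ∧
    ∀ n : ℤ, ∀ i : ℕ, (h : i < (φ (u n)).length) → u (k n + i) = (φ (u n)).get ⟨i, h⟩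

/-- `z` is the ancestor of `y` in the interval `J`, for the 3iet `T3 ε l c`:
`z ∈ J`, some iterate of `z` equals `y`, and no intermediate positive iterate
up to that one lies in `J`. -/
def IsAncestor (ε l c : ℝ) (J : Set ℝ) (y z : ℝ) : Prop :=
  z ∈ J ∧ ∃ k : ℕ, (T3 ε l c)^[k] z = y ∧
    ∀ j : ℕ, 1 ≤ j → j ≤ k → (T3 ε l c)^[j] z ∉ J

/-- Value of a pair of integers at a real number. -/
def vl (x : ℝ) (p : ℤ × ℤ) : ℝ := (p.1 : ℝ) + (p.2 : ℝ) * x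

lemma vl_add (x : ℝ) (p q : ℤ × ℤ) : vl x (p + q) = vl x p + vl x q := by
  simp [vl]; ring

lemma vl_sub (x : ℝ) (p q : ℤ × ℤ) : vl x (p - q) = vl x p - vl x q := by
  simp [vl]; ring

lemma vl_neg (x : ℝ) (p : ℤ × ℤ) : vl x (-p) = - vl x p := by
  simp [vl]; ring

lemma vl_zero (x : ℝ) : vl x 0 = 0 := by simp [vl]

lemma rat_lin_zero {x : ℝ} (hx : Irrational x) {a b : ℚ} (h : (a : ℝ) + b * x = 0) :
    a = 0 ∧ b = 0 := by
  have hb : b = 0 := by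
    by_contra hb
    apply hx
    refine ⟨-a / b, ?_⟩
    have hb' : (b : ℝ) ≠ 0 := by exact_mod_cast hb
    push_cast
    rw [div_eq_iff hb']
    linarith
  subst hb
  simp at h
  exact ⟨h, rfl⟩

lemma vl_eq_zero {x : ℝ} (hx : Irrational x) {p : ℤ × ℤ} (h : vl x p = 0) : p = 0 := by
  have h' : (((p.1 : ℤ) : ℚ) : ℝ) + ((p.2 : ℤ) : ℚ) * x = 0 := by
    simpa [vl] using h
  obtain ⟨h1, h2⟩ := rat_lin_zero hx h'
  ext
  · exact_mod_cast h1
  · exact_mod_cast h2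

lemma vl_inj {x : ℝ} (hx : Irrational x) {p q : ℤ × ℤ} (h : vl x p = vl x q) : p = q := by
  have := vl_eq_zero hx (p := p - q) (by rw [vl_sub, h, sub_self])
  exact sub_eq_zero.mp this

/-- The translation vectors of the three letters. -/
def st : Fin 3 → ℤ × ℤ := ![(1, -1), (1, -2), (0, -1)]

/-- Standing hypotheses. -/
structure Ctx (ε e l c : ℝ) : Prop where
  irr : Irrational ε
  irre : Irrational e
  pos : 0 < ε
  lt1 : ε < 1
  eneg : e < 0
  l1 : ε < l
  l2 : 1 - ε < l
  l3 : l < 1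
  c1 : c ≤ 0
  c2 : 0 < c + l

lemma T3_eq (ε l c x : ℝ) : T3 ε l c x = x + vl ε (st (letter3 ε l c x)) := by
  unfold T3 letter3
  split_ifs <;> simp [vl, st] <;> ring

lemma Ctx.stpos {ε e l c : ℝ} (H : Ctx ε e l c) (a : Fin 3) : -e ≤ vl e (st a) := by
  have := H.eneg
  fin_cases a <;> simp [vl, st] <;> linarith

lemma Ctx.stpos' {ε e l c : ℝ} (H : Ctx ε e l c) (a : Fin 3) : 0 < vl e (st a) := by
  have := H.eneg
  have := H.stpos a
  linarith

lemma Ctx.T_mem {ε e l c : ℝ} (H : Ctx ε e l c) {x : ℝ} (hx : x ∈ Set.Ico c (c + l)) :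
    T3 ε l c x ∈ Set.Ico c (c + l) := by
  obtain ⟨h1, h2⟩ := hx
  obtain ⟨_, _, _, _, _, _, _, _, _, _⟩ := H
  unfold T3
  split_ifs <;> constructor <;> linarith

lemma Ctx.T_inj {ε e l c : ℝ} (H : Ctx ε e l c) {x y : ℝ} (hx : x ∈ Set.Ico c (c + l))
    (hy : y ∈ Set.Ico c (c + l)) (h : T3 ε l c x = T3 ε l c y) : x = y := by
  obtain ⟨h1, h2⟩ := hx
  obtain ⟨h3, h4⟩ := hy
  obtain ⟨_, _, _, _, _, _, _, _, _, _⟩ := H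
  unfold T3 at h
  split_ifs at h <;> linarith

lemma Ctx.iter_mem {ε e l c : ℝ} (H : Ctx ε e l c) {x : ℝ} (hx : x ∈ Set.Ico c (c + l)) (j : ℕ) :
    (T3 ε l c)^[j] x ∈ Set.Ico c (c + l) := by
  induction j with
  | zero => simpa using hx
  | succ j ih => rw [Function.iterate_succ_apply']; exact H.T_mem ih

lemma Ctx.iter_inj {ε e l c : ℝ} (H : Ctx ε e l c) (j : ℕ) {x y : ℝ}
    (hx : x ∈ Set.Ico c (c + l))
    (hy : y ∈ Set.Ico c (c + l)) (h : (T3 ε l c)^[j] x = (T3 ε l c)^[j] y) : x = y := by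
  induction j with
  | zero => simpa using h
  | succ j ih =>
    rw [Function.iterate_succ_apply', Function.iterate_succ_apply'] at h
    exact ih (H.T_inj (H.iter_mem hx j) (H.iter_mem hy j) h)

/-- successor property -/
lemma Ctx.succ_le {ε e l c : ℝ} (H : Ctx ε e l c) {x : ℝ} (hx : x ∈ Set.Ico c (c + l))
    {p : ℤ × ℤ} (hp : 0 < vl e p) (hxp : x + vl ε p ∈ Set.Ico c (c + l)) :
    vl e (st (letter3 ε l c x)) ≤ vl e p := by
  obtain ⟨a, b⟩ := p
  obtain ⟨h1, h2⟩ := hx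
  obtain ⟨h3, h4⟩ := hxp
  obtain ⟨_, _, hpos, hlt, he, hl1, hl2, hl3, _, _⟩ := H
  simp only [vl] at hp h3 h4 ⊢
  have hz1 : (a : ℝ) + b * ε < 1 := by linarith
  have hz2 : -1 < (a : ℝ) + b * ε := by linarith
  have hb : b ≤ -1 := by
    by_contra hb
    have hb : 0 ≤ b := by omega
    have hb' : (0 : ℝ) ≤ b := by exact_mod_cast hb
    have hapos : (0 : ℝ) < a := by nlinarith
    have ha1 : (1 : ℝ) ≤ a := by
      have : 0 < a := by exact_mod_cast hapos
      exact_mod_cast this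
    nlinarith
  have hb' : (b : ℝ) ≤ -1 := by exact_mod_cast hb
  have ha : 0 ≤ a := by
    have : (-1 : ℝ) < a := by nlinarith
    have : -1 < a := by exact_mod_cast this
    omega
  have ha' : (0 : ℝ) ≤ a := by exact_mod_cast ha
  have hbe : -e ≤ b * e := by nlinarith
  unfold letter3
  split_ifs with h5 h6
  · have : a ≠ 0 := by
      rintro rfl
      simp at h3
      nlinarith
    have : 1 ≤ a := by omega
    have : (1 : ℝ) ≤ a := by exact_mod_cast this
    simp [st]; linarith
  · have : a ≠ 0 := by
      rintro rfl
      simp at h3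
      nlinarith
    have : 1 ≤ a := by omega
    have ha1 : (1 : ℝ) ≤ a := by exact_mod_cast this
    have : b ≠ -1 := by
      rintro rfl
      simp at h4
      nlinarith
    have hb2 : b ≤ -2 := by omega
    have hb2' : (b : ℝ) ≤ -2 := by exact_mod_cast hb2
    simp [st]; nlinarith
  · simp [st]; linarith

/-- accumulated displacement -/
noncomputable def dsp (ε l c x : ℝ) (j : ℕ) : ℤ × ℤ :=
  ∑ i ∈ Finset.range j, st (letter3 ε l c ((T3 ε l c)^[i] x))

lemma dsp_zero (ε l c x : ℝ) : dsp ε l c x 0 = 0 := by simp [dsp]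

lemma dsp_succ (ε l c x : ℝ) (j : ℕ) :
    dsp ε l c x (j + 1) = dsp ε l c x j + st (letter3 ε l c ((T3 ε l c)^[j] x)) := by
  simp [dsp, Finset.sum_range_succ]

lemma iter_eq (ε l c x : ℝ) (j : ℕ) : (T3 ε l c)^[j] x = x + vl ε (dsp ε l c x j) := by
  induction j with
  | zero => simp [dsp, vl]
  | succ j ih => rw [Function.iterate_succ_apply', T3_eq, dsp_succ, vl_add, ← add_assoc, ← ih]

lemma Ctx.dsp_mono {ε e l c : ℝ} (H : Ctx ε e l c) (x : ℝ) :
    StrictMono (fun j => vl e (dsp ε l c x j)) := by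
  apply strictMono_nat_of_lt_succ
  intro j
  rw [dsp_succ, vl_add]
  have := H.stpos' (letter3 ε l c ((T3 ε l c)^[j] x))
  linarith

lemma Ctx.dsp_ge {ε e l c : ℝ} (H : Ctx ε e l c) (x : ℝ) (j : ℕ) :
    j * (-e) ≤ vl e (dsp ε l c x j) := by
  induction j with
  | zero => simp [dsp, vl]
  | succ j ih =>
    rw [dsp_succ, vl_add]
    have := H.stpos (letter3 ε l c ((T3 ε l c)^[j] x))
    push_cast; linarith

lemma Ctx.orbit {ε e l c : ℝ} (H : Ctx ε e l c) {x : ℝ} (hx : x ∈ Set.Ico c (c + l))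
    {p : ℤ × ℤ} (hp : 0 ≤ vl e p) (hxp : x + vl ε p ∈ Set.Ico c (c + l)) :
    ∃ j, dsp ε l c x j = p := by
  have hf : ∃ j, vl e p < vl e (dsp ε l c x j) := by
    obtain ⟨n, hn⟩ := exists_nat_gt (vl e p / (-e))
    refine ⟨n, lt_of_lt_of_le ?_ (H.dsp_ge x n)⟩
    have := H.eneg
    rwa [div_lt_iff₀ (by linarith)] at hn
  classical
  have h1 := Nat.find_spec hf
  have h2 := @Nat.find_min _ _ hf
  set n := Nat.find hf with hn
  rcases n with _ | j
  · simp [dsp_zero, vl_zero] at h1; linarith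
  refine ⟨j, ?_⟩
  have h3 := h2 (Nat.lt_succ_self j)
  push Not at h3
  rcases h3.eq_or_lt with h3 | h3
  · exact vl_inj H.irre h3
  exfalso
  have h4 := H.succ_le (H.iter_mem hx j) (p := p - dsp ε l c x j) (by rw [vl_sub]; linarith)
    (by rw [iter_eq, vl_sub]; convert hxp using 1; ring)
  rw [dsp_succ, vl_add] at h1
  rw [vl_sub] at h4
  linarith

lemma dsp_congr {ε l c x y : ℝ} {j : ℕ}
    (h : ∀ i < j, letter3 ε l c ((T3 ε l c)^[i] x) = letter3 ε l c ((T3 ε l c)^[i] y)) :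
    dsp ε l c x j = dsp ε l c y j := by
  unfold dsp
  apply Finset.sum_congr rfl
  intro i hi
  rw [h i (Finset.mem_range.mp hi)]

lemma letter_right (ε l c x : ℝ) : ∃ δ > 0, ∀ y, x ≤ y → y < x + δ →
    letter3 ε l c y = letter3 ε l c x := by
  unfold letter3
  by_cases h1 : x < c + l - 1 + ε
  · refine ⟨c + l - 1 + ε - x, by linarith, fun y h2 h3 => ?_⟩
    rw [if_pos (by linarith), if_pos h1]
  · by_cases h4 : x < c + ε
    · refine ⟨c + ε - x, by linarith, fun y h2 h3 => ?_⟩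
      rw [if_neg (by linarith), if_pos (by linarith), if_neg h1, if_pos h4]
    · refine ⟨1, by linarith, fun y h2 h3 => ?_⟩
      rw [if_neg (by linarith), if_neg (by linarith), if_neg h1, if_neg h4]

lemma itin_right (ε l c x : ℝ) (j : ℕ) : ∃ δ > 0, ∀ y, x ≤ y → y < x + δ →
    ∀ i < j, letter3 ε l c ((T3 ε l c)^[i] y) = letter3 ε l c ((T3 ε l c)^[i] x) := by
  induction j with
  | zero => exact ⟨1, one_pos, by simp⟩
  | succ j ih =>
    obtain ⟨δ, hδ, h⟩ := ih
    obtain ⟨δ', hδ', h'⟩ := letter_right ε l c ((T3 ε l c)^[j] x)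
    refine ⟨min δ δ', lt_min hδ hδ', fun y hy1 hy2 i hi => ?_⟩
    have hd := h y hy1 (lt_of_lt_of_le hy2 (by gcongr; exact min_le_left _ _))
    rcases Nat.lt_succ_iff_lt_or_eq.mp hi with hi | rfl
    · exact hd i hi
    have h2 := dsp_congr hd
    have hy3 : y < x + δ' := lt_of_lt_of_le hy2 (by gcongr; exact min_le_right _ _)
    apply h' <;> rw [iter_eq, iter_eq, h2] <;> linarith

lemma letter_mono (ε l c : ℝ) (h : l < 1) {x y : ℝ} (hxy : x ≤ y) :
    letter3 ε l c x ≤ letter3 ε l c y := by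
  unfold letter3
  split_ifs <;> first | decide | (exfalso; linarith)

lemma ancestor_unique {ε e l c : ℝ} (H : Ctx ε e l c) {J : Set ℝ} (hJ : J ⊆ Set.Ico c (c + l))
    {d z w : ℝ} (h1 : IsAncestor ε l c J d z) (h2 : IsAncestor ε l c J d w) : z = w := by
  have key : ∀ (z w : ℝ) (k m : ℕ), z ∈ J → w ∈ J → (T3 ε l c)^[k] z = d →
      (T3 ε l c)^[m] w = d → (∀ j : ℕ, 1 ≤ j → j ≤ m → (T3 ε l c)^[j] w ∉ J) → k ≤ m → z = w := by
    intro z w k m hz hw hk hm hn hkm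
    obtain ⟨i, rfl⟩ := Nat.exists_eq_add_of_le hkm
    rw [Function.iterate_add_apply, ← hk] at hm
    have := H.iter_inj k (H.iter_mem (hJ hw) i) (hJ hz) hm
    rcases Nat.eq_zero_or_pos i with rfl | hi
    · simpa using this.symm
    · exact absurd (this ▸ hz) (hn i hi (by omega))
  obtain ⟨hz, k, hk, hk'⟩ := h1
  obtain ⟨hw, m, hm, hm'⟩ := h2
  rcases le_total k m with h | h
  · exact key z w k m hz hw hk hm hm' h
  · exact (key w z m k hw hz hm hk hk' h).symm

/-- one-sided density -/
lemma dens_aux {x : ℝ} (hx : Irrational x) {α β : ℝ} (h : α < β) (N : ℤ) :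
    ∃ p : ℤ × ℤ, N ≤ p.2 ∧ α < vl x p ∧ vl x p < β := by
  obtain ⟨n, hn⟩ := exists_nat_gt (1 / (β - α))
  have hba : 0 < β - α := by linarith
  have hn0 : 0 < n := by
    have : (0 : ℝ) < n := lt_trans (by positivity) hn
    exact_mod_cast this
  obtain ⟨j, k, hk0, hkn, hjk⟩ := Real.exists_int_int_abs_mul_sub_le x hn0
  set g : ℝ := k * x - j with hg
  have hg0 : g ≠ 0 := by
    intro h0
    have := vl_eq_zero hx (p := (-j, k)) (by simp [vl]; linarith)
    simp at this
    omega
  have hglt : |g| < β - α := by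
    refine lt_of_le_of_lt hjk ?_
    rw [div_lt_iff₀ hba] at hn
    rw [div_lt_iff₀ (by positivity)]
    nlinarith
  have hk1 : (1 : ℤ) ≤ k := hk0
  have main : ∀ m : ℕ, ∃ (a : ℤ) (i : ℕ), m ≤ i ∧ α < a + i * g ∧ a + i * g < β := by
    intro m
    rcases lt_or_gt_of_ne hg0 with hneg | hpos
    · rw [abs_of_neg hneg] at hglt
      obtain ⟨a, ha⟩ := exists_int_gt (β - m * g)
      have hng : 0 < -g := by linarith
      have hge : m < ((a : ℝ) - β) / (-g) := by rw [lt_div_iff₀ hng]; linarith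
      have h0 : 0 ≤ ((a : ℝ) - β) / (-g) := le_trans (by positivity) hge.le
      have h1 := Nat.lt_floor_add_one (((a : ℝ) - β) / (-g))
      have h2 := Nat.floor_le h0
      have h3 : m ≤ ⌊((a : ℝ) - β) / (-g)⌋₊ := Nat.le_floor hge.le
      rw [div_lt_iff₀ hng] at h1
      rw [le_div_iff₀ hng] at h2
      refine ⟨a, ⌊((a : ℝ) - β) / (-g)⌋₊ + 1, by omega, ?_, ?_⟩ <;> push_cast <;> linarith
    · rw [abs_of_pos hpos] at hglt
      obtain ⟨a, ha⟩ := exists_int_lt (α - m * g)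
      have hge : m < (α - (a : ℝ)) / g := by rw [lt_div_iff₀ hpos]; linarith
      have h0 : 0 ≤ (α - (a : ℝ)) / g := le_trans (by positivity) hge.le
      have h1 := Nat.lt_floor_add_one ((α - (a : ℝ)) / g)
      have h2 := Nat.floor_le h0
      have h3 : m ≤ ⌊(α - (a : ℝ)) / g⌋₊ := Nat.le_floor hge.le
      rw [div_lt_iff₀ hpos] at h1
      rw [le_div_iff₀ hpos] at h2
      refine ⟨a, ⌊(α - (a : ℝ)) / g⌋₊ + 1, by omega, ?_, ?_⟩ <;> push_cast <;> linarith
  obtain ⟨a, i, hi, h1, h2⟩ := main N.toNat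
  refine ⟨(a - i * j, i * k), ?_, ?_, ?_⟩
  · have : N ≤ i := by omega
    show N ≤ i * k
    nlinarith
  · simp only [vl]; push_cast; rw [hg] at h1; linarith
  · simp only [vl]; push_cast; rw [hg] at h2; linarith

/-- density with congruence and with control of the conjugate -/
lemma dens_lo {x e : ℝ} (hx : Irrational x) (he : e < x) {α β : ℝ} (h : α < β) (D : ℕ)
    (hD : 0 < D) (s : ℤ × ℤ) (R : ℝ) :
    ∃ q : ℤ × ℤ, α < vl x (s + D • q) ∧ vl x (s + D • q) < β ∧ vl e (s + D • q) < R := by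
  have hD' : (0 : ℝ) < D := by exact_mod_cast hD
  have hab : (α - vl x s) / D < (β - vl x s) / D := by gcongr
  -- conj = val - b (x - e)
  obtain ⟨N, hN⟩ := exists_int_gt ((β - R) / (x - e) - s.2)
  obtain ⟨q, hq, h1, h2⟩ := dens_aux hx hab (max N 0)
  have hm : ∀ y, vl y (s + D • q) = vl y s + D * vl y q := by
    intro y; simp [vl]; ring
  rw [div_lt_iff₀ hD'] at h1
  rw [lt_div_iff₀ hD'] at h2
  refine ⟨q, by rw [hm]; linarith, by rw [hm]; linarith, ?_⟩
  have h3 : vl e (s + D • q) = vl x (s + D • q) - (s.2 + D * q.2) * (x - e) := by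
    simp [vl]; ring
  have h4 : (N : ℝ) ≤ D * q.2 := by
    have h5 : N ≤ q.2 := le_trans (le_max_left _ _) hq
    have h6 : 0 ≤ q.2 := le_trans (le_max_right _ _) hq
    have : N ≤ D * q.2 := by
      have : (1 : ℤ) ≤ D := by exact_mod_cast hD
      nlinarith
    exact_mod_cast this
  have h5 : (β - R) / (x - e) < s.2 + D * q.2 := by linarith
  rw [div_lt_iff₀ (by linarith)] at h5
  rw [h3, hm]; linarith

lemma dens_hi {x e : ℝ} (hx : Irrational x) (he : e < x) {α β : ℝ} (h : α < β) (D : ℕ)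
    (hD : 0 < D) (s : ℤ × ℤ) (R : ℝ) :
    ∃ q : ℤ × ℤ, α < vl x (s + D • q) ∧ vl x (s + D • q) < β ∧ R < vl e (s + D • q) := by
  obtain ⟨q, h1, h2, h3⟩ := dens_lo hx he (neg_lt_neg h) D hD (-s) (-R)
  refine ⟨-q, ?_, ?_, ?_⟩
  all_goals
    have hm : ∀ y, vl y (s + D • (-q)) = - vl y (-s + D • q) := by
      intro y; rw [← vl_neg]; congr 1; rw [smul_neg]; abel
    rw [hm]; linarith

/-- relative density -/
lemma rel_dense {x e : ℝ} (hx : Irrational x) (he : e < x) {α β : ℝ} (h : α < β) :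
    ∃ G : ℝ, ∀ X : ℝ, ∃ p : ℤ × ℤ, α ≤ vl x p ∧ vl x p < β ∧ X ≤ vl e p ∧ vl e p < X + G := by
  have hη : 0 < (β - α) / 2 := by linarith
  obtain ⟨g1, h1, h2, h3⟩ := dens_hi hx he hη 1 one_pos 0 0
  obtain ⟨g2, h4, h5, h6⟩ := dens_hi hx he (neg_lt_zero.mpr hη) 1 one_pos 0 0
  simp only [one_smul, zero_add] at h1 h2 h3 h4 h5 h6
  refine ⟨max (vl e g1) (vl e g2), fun X => ?_⟩
  obtain ⟨p0, h7, h8, h9⟩ := dens_lo hx he h 1 one_pos 0 X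
  simp only [one_smul, zero_add] at h7 h8 h9
  let f : ℤ × ℤ → ℤ × ℤ := fun p => if vl x p < (α + β) / 2 then p + g1 else p + g2
  have hf1 : ∀ n : ℕ, α ≤ vl x (f^[n] p0) ∧ vl x (f^[n] p0) < β := by
    intro n
    induction n with
    | zero => exact ⟨h7.le, h8⟩
    | succ n ih =>
      rw [Function.iterate_succ_apply']
      simp only [f]
      split_ifs with hlt <;> rw [vl_add] <;> constructor <;> linarith
  have hstep : ∀ p, vl e p + min (vl e g1) (vl e g2) ≤ vl e (f p) ∧
      vl e (f p) ≤ vl e p + max (vl e g1) (vl e g2) := by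
    intro p
    simp only [f]
    split_ifs <;> rw [vl_add] <;> constructor <;> gcongr <;> simp
  have hmin : 0 < min (vl e g1) (vl e g2) := lt_min h3 h6
  have hgrow : ∀ n : ℕ, vl e p0 + n * min (vl e g1) (vl e g2) ≤ vl e (f^[n] p0) := by
    intro n
    induction n with
    | zero => simp
    | succ n ih =>
      rw [Function.iterate_succ_apply']
      have := (hstep (f^[n] p0)).1
      push_cast; linarith
  have hex : ∃ n : ℕ, X ≤ vl e (f^[n] p0) := by
    obtain ⟨n, hn⟩ := exists_nat_gt ((X - vl e p0) / min (vl e g1) (vl e g2))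
    rw [div_lt_iff₀ hmin] at hn
    exact ⟨n, by linarith [hgrow n]⟩
  classical
  have hs := Nat.find_spec hex
  have hm := @Nat.find_min _ _ hex
  set n := Nat.find hex with hn
  rcases n with _ | n
  · simp at hs; linarith
  have h10 := hm (Nat.lt_succ_self n)
  push Not at h10
  refine ⟨f^[n+1] p0, (hf1 _).1, (hf1 _).2, hs, ?_⟩
  rw [Function.iterate_succ_apply']
  have := (hstep (f^[n] p0)).2
  linarith

lemma Ctx.eltε {ε e l c : ℝ} (H : Ctx ε e l c) : e < ε := lt_trans H.eneg H.pos

/-- A trajectory together with its lift to pairs of integers. -/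
structure Traj (ε e l c : ℝ) (u : ℤ → Fin 3) (t : ℤ → ℝ) (τ : ℤ → ℤ × ℤ) : Prop where
  t0 : t 0 = 0
  mem : ∀ n, t n ∈ Set.Ico c (c + l)
  step : ∀ n, t (n + 1) = T3 ε l c (t n)
  let3 : ∀ n, u n = letter3 ε l c (t n)
  val : ∀ n, t n = vl ε (τ n)
  tau0 : τ 0 = 0
  tstep : ∀ n, τ (n + 1) = τ n + st (u n)
  mono : StrictMono (fun n => vl e (τ n))
  surj : ∀ p, vl ε p ∈ Set.Ico c (c + l) → ∃ n, τ n = p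

lemma iter_t {ε l c : ℝ} {t : ℤ → ℝ} (h : ∀ n, t (n + 1) = T3 ε l c (t n)) (n : ℤ) (j : ℕ) :
    (T3 ε l c)^[j] (t n) = t (n + j) := by
  induction j with
  | zero => simp
  | succ j ih =>
    rw [Function.iterate_succ_apply', ih, ← h]
    push_cast; ring_nf

lemma exists_traj {ε e l c : ℝ} (H : Ctx ε e l c) {u : ℤ → Fin 3} (hu : IsThreeIetWord ε l c u) :
    ∃ t τ, Traj ε e l c u t τ := by
  obtain ⟨t, h0, hmem, hstep, hlet⟩ := hu
  have hex : ∀ n : ℤ, ∃ p, t n = vl ε p := by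
    intro n
    induction n using Int.induction_on with
    | zero => exact ⟨0, by rw [h0, vl_zero]⟩
    | succ i ih =>
      obtain ⟨p, hp⟩ := ih
      exact ⟨p + st (letter3 ε l c (t i)), by rw [hstep, T3_eq, hp, vl_add]⟩
    | pred i ih =>
      obtain ⟨p, hp⟩ := ih
      have := hstep (-i - 1)
      rw [sub_add_cancel, T3_eq, hp] at this
      exact ⟨p - st (letter3 ε l c (t (-i - 1))), by rw [vl_sub]; linarith⟩
  choose τ hτ using hex
  have htau0 : τ 0 = 0 := vl_eq_zero H.irr (by rw [← hτ, h0])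
  have htstep : ∀ n, τ (n + 1) = τ n + st (u n) := by
    intro n
    apply vl_inj H.irr
    rw [vl_add, ← hτ, ← hτ, hstep, T3_eq, hlet]
  have hmono : StrictMono (fun n => vl e (τ n)) := by
    apply strictMono_int_of_lt_succ
    intro n
    rw [htstep, vl_add]
    linarith [H.stpos' (u n)]
  refine ⟨t, τ, h0, hmem, hstep, hlet, hτ, htau0, htstep, hmono, ?_⟩
  intro p hp
  rcases le_total 0 (vl e p) with h | h
  · have hz : (0 : ℝ) ∈ Set.Ico c (c + l) := ⟨H.c1, H.c2⟩
    obtain ⟨j, hj⟩ := H.orbit hz h (by simpa using hp)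
    refine ⟨j, vl_inj H.irr ?_⟩
    have := iter_t hstep 0 j
    rw [h0, iter_eq, hj, zero_add, zero_add] at this
    rw [← hτ, this]
  · obtain ⟨j, hj⟩ := H.orbit hp (p := -p) (by rw [vl_neg]; linarith)
      (by rw [vl_neg]; simp [H.c1, H.c2])
    refine ⟨-j, vl_inj H.irr ?_⟩
    have := iter_t hstep (-j) j
    rw [neg_add_cancel, h0] at this
    rw [← hτ]
    refine H.iter_inj j (hmem _) hp ?_
    rw [this, iter_eq, hj, vl_neg]; ring

lemma Traj.tau_dsp {ε e l c : ℝ} {u : ℤ → Fin 3} {t : ℤ → ℝ} {τ : ℤ → ℤ × ℤ}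
    (Y : Traj ε e l c u t τ) (n : ℤ) (j : ℕ) : τ (n + j) = τ n + dsp ε l c (t n) j := by
  induction j with
  | zero => simp [dsp_zero]
  | succ j ih =>
    rw [dsp_succ, iter_t Y.step, ← Y.let3, ← add_assoc, ← ih, ← Y.tstep]
    push_cast; ring_nf

lemma Traj.dense {ε e l c : ℝ} (H : Ctx ε e l c) {u : ℤ → Fin 3} {t : ℤ → ℝ} {τ : ℤ → ℤ × ℤ}
    (Y : Traj ε e l c u t τ) {x δ : ℝ} (hx : x ∈ Set.Ico c (c + l)) (hδ : 0 < δ) (D : ℕ)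
    (hD : 0 < D) (s : ℤ × ℤ) :
    ∃ (n : ℕ) (q : ℤ × ℤ), x < t n ∧ t n < x + δ ∧ τ n = s + D • q := by
  have h : x < min (x + δ) (c + l) := lt_min (by linarith) hx.2
  obtain ⟨q, h1, h2, h3⟩ := dens_hi H.irr H.eltε h D hD s 0
  obtain ⟨n, hn⟩ := Y.surj (s + D • q) ⟨by linarith [hx.1], lt_of_lt_of_le h2 (min_le_right _ _)⟩
  have hpos : 0 < n := by
    have : vl e (τ 0) < vl e (τ n) := by rw [Y.tau0, vl_zero, hn]; exact h3
    exact Y.mono.lt_iff_lt.mp this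
  lift n to ℕ using hpos.le
  refine ⟨n, q, ?_, ?_, hn⟩
  · rw [Y.val, hn]; exact h1
  · rw [Y.val, hn]; exact lt_of_lt_of_le h2 (min_le_left _ _)
lemma letter_between {ε l c : ℝ} (h : l < 1) {x y z : ℝ} (hxy : x ≤ y) (hyz : y ≤ z)
    (hxz : letter3 ε l c x = letter3 ε l c z) : letter3 ε l c y = letter3 ε l c x :=
  le_antisymm ((letter_mono ε l c h hyz).trans hxz.symm.le) (letter_mono ε l c h hxy)

lemma letter_ne_disc {ε l c : ℝ} {x y : ℝ} (hxy : x ≤ y)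
    (h : letter3 ε l c x ≠ letter3 ε l c y) :
    ∃ d, (d = c + ε ∨ d = c + l - (1 - ε)) ∧ x < d ∧ d ≤ y := by
  by_contra hcon
  push Not at hcon
  have h1 := hcon _ (Or.inl rfl)
  have h2 := hcon _ (Or.inr rfl)
  apply h
  unfold letter3
  split_ifs <;> first | rfl | (exfalso; grind)

lemma disc_letter_ne {ε l c : ℝ} (hl : l < 1) {d x y : ℝ}
    (hd : d = c + ε ∨ d = c + l - (1 - ε)) (hx : x < d) (hy : d ≤ y) :
    letter3 ε l c x ≠ letter3 ε l c y := by
  rcases hd with rfl | rfl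
  · unfold letter3
    split_ifs <;> first | (exfalso; linarith) | decide
  · unfold letter3
    split_ifs <;> first | (exfalso; linarith) | decide

lemma fixed_mem {u : ℤ → Fin 3} {φ : Fin 3 → List (Fin 3)} {k : ℤ → ℤ} (hk : StrictMono k)
    (hstep : ∀ n, k (n + 1) = k n + (φ (u n)).length)
    (hlet : ∀ n : ℤ, ∀ i : ℕ, (h : i < (φ (u n)).length) → u (k n + i) = (φ (u n)).get ⟨i, h⟩)
    (n : ℕ) : ∀ i j m : ℤ, k^[n] i ≤ m → m < k^[n] (i + 1) → j = m →
      u m ∈ (substWord φ)^[n] [u i] := by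
  induction n with
  | zero =>
    intro i j m h1 h2 _
    simp at h1 h2 ⊢
    have : m = i := by omega
    rw [this]
  | succ n ih =>
    intro i j m h1 h2 _
    rw [Function.iterate_succ_apply'] at h1 h2 ⊢
    -- find a block
    have key : ∀ N : ℕ, m < k (k^[n] i + N) →
        ∃ j, k^[n] i ≤ j ∧ j < k^[n] i + N ∧ k j ≤ m ∧ m < k (j + 1) := by
      intro N
      induction N with
      | zero => intro h; simp at h; omega
      | succ N ihN =>
        intro h
        by_cases h3 : m < k (k^[n] i + N)
        · obtain ⟨j, a, b, c, d⟩ := ihN h3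
          exact ⟨j, a, by push_cast; omega, c, d⟩
        · refine ⟨k^[n] i + N, by omega, by push_cast; omega, by omega, ?_⟩
          convert h using 2
          push_cast; ring
    have hlt : k^[n] i ≤ k^[n] (i + 1) := (hk.iterate n).monotone (by omega)
    obtain ⟨j, a, b, h3, h4⟩ := key (k^[n] (i + 1) - k^[n] i).toNat (by
      rw [Int.toNat_of_nonneg (by omega)]
      convert h2 using 2
      ring)
    rw [Int.toNat_of_nonneg (by omega)] at b
    have h5 := ih i j j a (by omega) rfl
    rw [hstep] at h4
    unfold substWord
    rw [List.mem_flatMap]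
    refine ⟨u j, h5, ?_⟩
    have h6 := hlet j (m - k j).toNat (by omega)
    have h7 : k j + ((m - k j).toNat : ℤ) = m := by omega
    rw [h7] at h6
    rw [h6]
    exact List.get_mem _ _

section back
variable {ε e l c : ℝ} {u : ℤ → Fin 3} {t : ℤ → ℝ} {τ : ℤ → ℤ × ℤ} {f : ℤ × ℤ → ℤ × ℤ} {μ Λ : ℝ}
  {k : ℤ → ℤ}

/-- Two blocks starting at places with the same letter agree. -/
lemma block_agree (H : Ctx ε e l c) (Y : Traj ε e l c u t τ)
    (hμ0 : 0 < μ) (hμ1 : μ < 1) (hΛ : 1 < Λ)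
    (hv : ∀ p, vl ε (f p) = μ * vl ε p) (hc : ∀ p, vl e (f p) = Λ * vl e p)
    (hs : Function.Surjective f) (hk : ∀ n, τ (k n) = f (τ n)) (hkm : StrictMono k)
    (hC2 : ∀ d, (d = c + ε ∨ d = c + l - (1 - ε)) →
      ∃ z, IsAncestor ε l c (Set.Ico (μ * c) (μ * (c + l))) d z ∧
        z ∈ ({μ * c, μ * (c + ε), μ * (c + l - (1 - ε))} : Set ℝ))
    {n n' : ℤ} (hnn : t n ≤ t n') (hun : u n = u n') (j : ℕ) (hj : (j : ℤ) ≤ k (n + 1) - k n) :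
    ∀ i < j, u (k n + i) = u (k n' + i) := by
  have hJ : Set.Ico (μ * c) (μ * (c + l)) ⊆ Set.Ico c (c + l) := by
    intro x hx
    have h1 := H.c1
    have h2 := H.c2
    exact ⟨by nlinarith [hx.1], by nlinarith [hx.2]⟩
  have htk : ∀ n, t (k n) = μ * t n := by
    intro n; rw [Y.val, hk, hv, ← Y.val]
  have hΛ0 : 0 < Λ := by linarith
  -- points of the trajectory in J are of the form t (k i)
  have hinJ : ∀ m, t m ∈ Set.Ico (μ * c) (μ * (c + l)) → ∃ i, m = k i := by
    intro m hm
    obtain ⟨p, hp⟩ := hs (τ m)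
    have hvp : t m = μ * vl ε p := by rw [Y.val, ← hp, hv]
    rw [hvp] at hm
    obtain ⟨i, hi⟩ := Y.surj p ⟨le_of_mul_le_mul_left hm.1 hμ0, lt_of_mul_lt_mul_left hm.2 hμ0.le⟩
    refine ⟨i, Y.mono.injective ?_⟩
    show vl e _ = vl e _
    rw [hk, hi, hp]
  induction j with
  | zero => intro i hi; omega
  | succ j ih =>
    have ihj := ih (by push_cast at hj; omega)
    intro i hi
    rcases Nat.lt_succ_iff_lt_or_eq.mp hi with hi | rfl
    · exact ihj i hi
    by_contra hne
    -- displacements agree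
    have hd : ∀ j' ≤ i, dsp ε l c (t (k n)) j' = dsp ε l c (t (k n')) j' := by
      intro j' hj'
      apply dsp_congr
      intro i' hi'
      rw [iter_t Y.step, iter_t Y.step, ← Y.let3, ← Y.let3]
      exact ihj i' (by omega)
    have htd : ∀ j' ≤ i, t (k n + j') = t (k n) + vl ε (dsp ε l c (t (k n)) j') ∧
        t (k n' + j') = t (k n') + vl ε (dsp ε l c (t (k n)) j') := by
      intro j' hj'
      constructor
      · rw [← iter_t Y.step, iter_eq]
      · rw [← iter_t Y.step, iter_eq, hd j' hj']
    have hle0 : t (k n) ≤ t (k n') := by rw [htk, htk]; gcongr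
    have hle : t (k n + i) ≤ t (k n' + i) := by
      rw [(htd i le_rfl).1, (htd i le_rfl).2]; linarith
    rw [Y.let3, Y.let3] at hne
    obtain ⟨d, hdd, hd1, hd2⟩ := letter_ne_disc hle hne
    obtain ⟨z0, hz0, hz0'⟩ := hC2 d hdd
    set z := t (k n) + (d - t (k n + i)) with hz
    have hz1 : t (k n) < z := by linarith
    have hz2 : z ≤ t (k n') := by
      have := htd i le_rfl
      linarith [this.1, this.2]
    -- the itinerary of z
    have hzit : ∀ j' ≤ i, ∀ i' < j', letter3 ε l c ((T3 ε l c)^[i'] z) =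
        letter3 ε l c ((T3 ε l c)^[i'] (t (k n))) := by
      intro j'
      induction j' with
      | zero => intro _ i' hi'; omega
      | succ j' ihz =>
        intro hj' i' hi'
        have ihz' := ihz (by omega)
        rcases Nat.lt_succ_iff_lt_or_eq.mp hi' with hi' | rfl
        · exact ihz' i' hi'
        have h1 := dsp_congr ihz'
        have h2 := htd i' (by omega)
        rw [iter_eq, h1, iter_t Y.step]
        apply letter_between H.l3 (z := t (k n' + i'))
        · linarith
        · linarith
        · rw [← Y.let3, ← Y.let3]; exact ihj i' (by omega)
    have hzd : ∀ j' ≤ i, (T3 ε l c)^[j'] z = z + vl ε (dsp ε l c (t (k n)) j') := by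
      intro j' hj'
      rw [iter_eq, dsp_congr (hzit j' hj')]
    have hmemk : ∀ n, t (k n) ∈ Set.Ico (μ * c) (μ * (c + l)) := by
      intro n
      have := Y.mem n
      rw [htk]
      exact ⟨mul_le_mul_of_nonneg_left this.1 hμ0.le, mul_lt_mul_of_pos_left this.2 hμ0⟩
    have hanc : IsAncestor ε l c (Set.Ico (μ * c) (μ * (c + l))) d z := by
      refine ⟨⟨le_trans (hmemk n).1 hz1.le, lt_of_le_of_lt hz2 (hmemk n').2⟩, i, ?_, ?_⟩
      · rw [hzd i le_rfl]
        have := (htd i le_rfl).1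
        linarith
      · intro j' hj1 hj2 hin
        rw [hzd j' hj2] at hin
        have h2 := htd j' hj2
        have hx : t (k n + j') ∉ Set.Ico (μ * c) (μ * (c + l)) := by
          intro hmem
          obtain ⟨i', hi'⟩ := hinJ _ hmem
          have h3 : k n < k i' := by omega
          have h4 : k i' < k (n + 1) := by push_cast at hj; omega
          have h5 := hkm.lt_iff_lt.mp h3
          have h6 := hkm.lt_iff_lt.mp h4
          omega
        have hy : t (k n' + j') ∉ Set.Ico (μ * c) (μ * (c + l)) := by
          intro hmem
          obtain ⟨i', hi'⟩ := hinJ _ hmem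
          have h3 : k n' < k i' := by omega
          have h5 := hkm.lt_iff_lt.mp h3
          have h6 : n' + 1 ≤ i' := by omega
          have h7 : vl e (τ (k (n' + 1))) ≤ vl e (τ (k i')) :=
            Y.mono.monotone (hkm.monotone h6)
          rw [← hi', Y.tau_dsp, vl_add, ← hd j' hj2, hk, hk, hc, hc, Y.tstep, vl_add] at h7
          have h8 : vl e (τ (k n + j')) < vl e (τ (k (n + 1))) := by
            apply Y.mono
            push_cast at hj; omega
          rw [Y.tau_dsp, vl_add, hk, hk, hc, hc, Y.tstep, vl_add, hun] at h8
          nlinarith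
        have h9 : t (k n + j') < μ * c := by
          by_contra h
          exact hx ⟨by linarith, by linarith [hin.2]⟩
        have h10 : μ * (c + l) ≤ t (k n' + j') := by
          by_contra h
          exact hy ⟨by linarith [hin.1], by linarith⟩
        have h11 := hmemk n
        have h12 := hmemk n'
        linarith [h11.1, h12.2, h2.1, h2.2]
    have hzz := ancestor_unique H hJ hz0 hanc
    rw [hzz] at hz0'
    rw [htk] at hz1 hz2
    rw [Y.let3, Y.let3] at hun
    simp only [Set.mem_insert_iff, Set.mem_singleton_iff] at hz0'
    rcases hz0' with h | h | h
    · rw [h] at hz1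
      have := lt_of_mul_lt_mul_left hz1 hμ0.le
      linarith [(Y.mem n).1]
    · rw [h] at hz1 hz2
      exact disc_letter_ne H.l3 (Or.inl rfl) (lt_of_mul_lt_mul_left hz1 hμ0.le)
        (le_of_mul_le_mul_left hz2 hμ0) hun
    · rw [h] at hz1 hz2
      exact disc_letter_ne H.l3 (Or.inr rfl) (lt_of_mul_lt_mul_left hz1 hμ0.le)
        (le_of_mul_le_mul_left hz2 hμ0) hun

/-- every letter is taken on a nonempty interval -/
lemma letter_interval (H : Ctx ε e l c) (a : Fin 3) :
    ∃ α β, α < β ∧ c ≤ α ∧ β ≤ c + l ∧ ∀ x, α ≤ x → x < β → letter3 ε l c x = a := by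
  obtain ⟨_, _, hpos, hlt, he, hl1, hl2, hl3, _, _⟩ := H
  fin_cases a
  · refine ⟨c, c + l - 1 + ε, by linarith, by linarith, by linarith, fun x h1 h2 => ?_⟩
    simp [letter3, h2]
  · refine ⟨c + l - 1 + ε, c + ε, by linarith, by linarith, by linarith, fun x h1 h2 => ?_⟩
    simp [letter3, h2, not_lt.mpr h1]
  · refine ⟨c + ε, c + l, by linarith, by linarith, by linarith, fun x h1 h2 => ?_⟩
    have : ¬ x < c + l - 1 + ε := by linarith
    simp [letter3, not_lt.mpr h1, this]

lemma back_dir (H : Ctx ε e l c) (Y : Traj ε e l c u t τ)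
    (hμ0 : 0 < μ) (hμ1 : μ < 1) (hΛ : 1 < Λ)
    (hv : ∀ p, vl ε (f p) = μ * vl ε p) (hc : ∀ p, vl e (f p) = Λ * vl e p)
    (hs : Function.Surjective f)
    (hC2 : ∀ d, (d = c + ε ∨ d = c + l - (1 - ε)) →
      ∃ z, IsAncestor ε l c (Set.Ico (μ * c) (μ * (c + l))) d z ∧
        z ∈ ({μ * c, μ * (c + ε), μ * (c + l - (1 - ε))} : Set ℝ)) :
    ∃ φ : Fin 3 → List (Fin 3), (∀ a, φ a ≠ []) ∧ IsPrimitiveSubst φ ∧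
        IsFixedPointSubstZ φ u := by
  have hΛ0 : 0 < Λ := by linarith
  have hkex : ∀ n, ∃ m, τ m = f (τ n) := by
    intro n
    apply Y.surj
    rw [hv, ← Y.val]
    have h1 := H.c1
    have h2 := H.c2
    have h3 := Y.mem n
    exact ⟨by nlinarith [h3.1], by nlinarith [h3.2]⟩
  choose k hk using hkex
  have hkm : StrictMono k := by
    intro a b hab
    have h1 : vl e (τ a) < vl e (τ b) := Y.mono hab
    have : vl e (τ (k a)) < vl e (τ (k b)) := by
      rw [hk, hk, hc, hc]
      exact mul_lt_mul_of_pos_left h1 hΛ0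
    exact Y.mono.lt_iff_lt.mp this
  have htinj : ∀ {a b}, vl e (τ a) = vl e (τ b) → a = b := fun h => Y.mono.injective h
  have hk0 : k 0 = 0 := by
    apply htinj
    rw [hk, hc, Y.tau0, vl_zero, mul_zero]
  -- block lengths agree
  have hlen : ∀ n n', t n ≤ t n' → u n = u n' → k (n + 1) - k n = k (n' + 1) - k n' := by
    intro n n' h1 h2
    have hpos : k n < k (n + 1) := hkm (by omega)
    obtain ⟨r, hr⟩ := Int.eq_ofNat_of_zero_le (by omega : 0 ≤ k (n + 1) - k n)
    have hag := block_agree H Y hμ0 hμ1 hΛ hv hc hs hk hkm hC2 h1 h2 r (by omega)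
    have hd : dsp ε l c (t (k n)) r = dsp ε l c (t (k n')) r := by
      apply dsp_congr
      intro i' hi'
      rw [iter_t Y.step, iter_t Y.step, ← Y.let3, ← Y.let3]
      exact hag i' (by omega)
    have e1 := Y.tau_dsp (k n) r
    have e2 := Y.tau_dsp (k n') r
    have e3 : k n + (r : ℤ) = k (n + 1) := by omega
    rw [e3] at e1
    have : k n' + (r : ℤ) = k (n' + 1) := by
      apply htinj
      have e4 : vl e (τ (k (n + 1))) = vl e (τ (k n) + dsp ε l c (t (k n)) r) := by rw [e1]
      rw [e2, ← hd, vl_add, hk, hk, hc, hc, Y.tstep, vl_add, ← h2]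
      rw [vl_add, hk, hk, hc, hc, Y.tstep, vl_add] at e4
      linarith
    omega
  have hlen' : ∀ n n', u n = u n' → k (n + 1) - k n = k (n' + 1) - k n' := by
    intro n n' h
    rcases le_total (t n) (t n') with h1 | h1
    · exact hlen n n' h1 h
    · exact (hlen n' n h1 h.symm).symm
  have hag' : ∀ n n', u n = u n' → ∀ i : ℕ, (i : ℤ) < k (n + 1) - k n →
      u (k n + i) = u (k n' + i) := by
    intro n n' h i hi
    rcases le_total (t n) (t n') with h1 | h1
    · exact block_agree H Y hμ0 hμ1 hΛ hv hc hs hk hkm hC2 h1 h (i + 1) (by push_cast; omega) i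
        (by omega)
    · have := hlen' n n' h
      exact (block_agree H Y hμ0 hμ1 hΛ hv hc hs hk hkm hC2 h1 h.symm (i + 1)
        (by push_cast; omega) i (by omega)).symm
  -- representatives
  have hrep : ∀ a : Fin 3, ∃ n : ℤ, u n = a := by
    intro a
    obtain ⟨α, β, h1, h2, h3, h4⟩ := letter_interval H a
    obtain ⟨n, _, h5, h6, _⟩ := Y.dense H (x := α) (δ := β - α) ⟨h2, by linarith⟩ (by linarith)
      1 one_pos 0
    refine ⟨n, ?_⟩
    rw [Y.let3]
    exact h4 _ h5.le (by linarith)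
  choose rep hrep using hrep
  have hpos : ∀ n, 0 < k (n + 1) - k n := by
    intro n
    have : k n < k (n + 1) := hkm (by omega)
    omega
  let φ : Fin 3 → List (Fin 3) := fun a =>
    List.ofFn (fun i : Fin (k (rep a + 1) - k (rep a)).toNat => u (k (rep a) + (i : ℕ)))
  have hφlen : ∀ n, ((φ (u n)).length : ℤ) = k (n + 1) - k n := by
    intro n
    simp only [φ, List.length_ofFn]
    rw [Int.toNat_of_nonneg (hpos _).le]
    exact hlen' _ _ (hrep _)
  have hstep : ∀ n, k (n + 1) = k n + (φ (u n)).length := by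
    intro n
    rw [hφlen]; ring
  have hlet : ∀ n : ℤ, ∀ i : ℕ, (h : i < (φ (u n)).length) →
      u (k n + i) = (φ (u n)).get ⟨i, h⟩ := by
    intro n i h
    have h' : (i : ℤ) < k (n + 1) - k n := by rw [← hφlen]; exact_mod_cast h
    simp only [φ, List.get_ofFn]
    exact hag' _ _ (hrep _).symm i h'
  refine ⟨φ, ?_, ?_, k, hkm, hk0, hstep, hlet⟩
  · intro a h
    have h1 := hφlen (rep a)
    rw [hrep, h] at h1
    have := hpos (rep a)
    simp at h1
    omega
  · have hG : ∀ b : Fin 3, ∃ G : ℝ, ∀ X : ℝ, ∃ p : ℤ × ℤ, vl ε p ∈ Set.Ico c (c + l) ∧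
        letter3 ε l c (vl ε p) = b ∧ X ≤ vl e p ∧ vl e p < X + G := by
      intro b
      obtain ⟨α, β, h1, h2, h3, h4⟩ := letter_interval H b
      obtain ⟨G, hG⟩ := rel_dense H.irr H.eltε h1
      refine ⟨G, fun X => ?_⟩
      obtain ⟨p, h5, h6, h7, h8⟩ := hG X
      exact ⟨p, ⟨by linarith, by linarith⟩, h4 _ h5 h6, h7, h8⟩
    choose G hG using hG
    obtain ⟨n, hn⟩ := pow_unbounded_of_one_lt ((|G 0| + |G 1| + |G 2|) / (-e)) hΛ
    have he : 0 < -e := by linarith [H.eneg]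
    rw [div_lt_iff₀ he] at hn
    have hGn : ∀ b, G b ≤ Λ ^ (n + 1) * (-e) := by
      intro b
      have h1 : Λ ^ n ≤ Λ ^ (n + 1) := pow_le_pow_right₀ hΛ.le (by omega)
      have h2 : G b ≤ |G 0| + |G 1| + |G 2| := by
        have h0 := abs_nonneg (G 0)
        have h1 := abs_nonneg (G 1)
        have h2 := abs_nonneg (G 2)
        fin_cases b
        · have := le_abs_self (G 0); simp; linarith
        · have := le_abs_self (G 1); simp; linarith
        · have := le_abs_self (G 2); simp; linarith
      nlinarith
    refine ⟨n + 1, by omega, fun a b => ?_⟩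
    have hiter : ∀ (m : ℕ) (i : ℤ), vl e (τ (k^[m] i)) = Λ ^ m * vl e (τ i) := by
      intro m i
      induction m with
      | zero => simp
      | succ m ih => rw [Function.iterate_succ_apply', hk, hc, ih, pow_succ]; ring
    obtain ⟨p, h1, h2, h3, h4⟩ := hG b (vl e (τ (k^[n+1] (rep a))))
    obtain ⟨m, hm⟩ := Y.surj p h1
    rw [← hm] at h3 h4
    have h5 : k^[n+1] (rep a) ≤ m := Y.mono.le_iff_le.mp h3
    have h6 : vl e (τ m) < vl e (τ (k^[n+1] (rep a + 1))) := by
      refine lt_of_lt_of_le h4 ?_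
      rw [hiter, hiter, Y.tstep, vl_add, mul_add]
      have := H.stpos (u (rep a))
      have h7 := hGn b
      have h8 : 0 < Λ ^ (n + 1) := by positivity
      nlinarith
    have h7 : m < k^[n+1] (rep a + 1) := Y.mono.lt_iff_lt.mp h6
    have h8 := fixed_mem hkm hstep hlet (n + 1) (rep a) m m h5 h7 rfl
    rw [hrep, Y.let3, Y.val, hm, h2] at h8
    exact h8
end back
lemma meas_T3 (ε l c : ℝ) : Measurable (T3 ε l c) := by
  unfold T3
  refine Measurable.ite measurableSet_Iio (by fun_prop) ?_
  exact Measurable.ite measurableSet_Iio (by fun_prop) (by fun_prop)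

lemma meas_letter3 (ε l c : ℝ) : Measurable (letter3 ε l c) := by
  unfold letter3
  refine Measurable.ite measurableSet_Iio (by fun_prop) ?_
  exact Measurable.ite measurableSet_Iio (by fun_prop) (by fun_prop)

lemma ii_of_bdd {F : ℝ → ℝ} (hF : Measurable F) {K : ℝ} (hK : ∀ x, |F x| ≤ K) (a b : ℝ) :
    IntervalIntegrable F MeasureTheory.volume a b := by
  refine (intervalIntegrable_const (c := K)).mono_fun hF.aestronglyMeasurable ?_
  refine Filter.Eventually.of_forall fun x => ?_
  simp only [Real.norm_eq_abs]
  exact (hK x).trans (le_abs_self _)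

lemma congr_Ioo' {F G : ℝ → ℝ} {a b : ℝ} (hab : a ≤ b) (h : ∀ x, a ≤ x → x < b → F x = G x) :
    ∫ x in a..b, F x = ∫ x in a..b, G x := by
  rw [intervalIntegral.integral_of_le hab, intervalIntegral.integral_of_le hab,
    MeasureTheory.integral_Ioc_eq_integral_Ioo, MeasureTheory.integral_Ioc_eq_integral_Ioo]
  exact MeasureTheory.setIntegral_congr_fun measurableSet_Ioo (fun x hx => h x hx.1.le hx.2)

section fwd
variable {ε e l c : ℝ} {u : ℤ → Fin 3} {t : ℤ → ℝ} {τ : ℤ → ℤ × ℤ}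

lemma int_T (H : Ctx ε e l c) {F : ℝ → ℝ} (hF : Measurable F) {K : ℝ} (hK : ∀ x, |F x| ≤ K) :
    ∫ x in c..(c + l), F (T3 ε l c x) = ∫ x in c..(c + l), F x := by
  obtain ⟨_, _, hpos, hlt, he, hl1, hl2, hl3, _, _⟩ := H
  have i1 := ii_of_bdd (F := fun x => F (T3 ε l c x)) (hF.comp (meas_T3 ε l c)) (fun x => hK _)
  have i2 := ii_of_bdd hF hK
  rw [← intervalIntegral.integral_add_adjacent_intervals (i1 c (c + ε)) (i1 (c + ε) (c + l)),
    ← intervalIntegral.integral_add_adjacent_intervals (i1 c (c + l - 1 + ε))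
      (i1 (c + l - 1 + ε) (c + ε)),
    congr_Ioo' (F := fun x => F (T3 ε l c x)) (G := fun x => F (x + (1 - ε))) (a := c)
      (b := c + l - 1 + ε) (by linarith)
      (fun x h1 h2 => by
        simp only [T3]; rw [if_pos h2]; congr 1; ring),
    congr_Ioo' (F := fun x => F (T3 ε l c x)) (G := fun x => F (x + (1 - 2 * ε)))
      (a := c + l - 1 + ε) (b := c + ε) (by linarith)
      (fun x h1 h2 => by
        simp only [T3]; rw [if_neg (by linarith), if_pos h2]; congr 1; ring),
    congr_Ioo' (F := fun x => F (T3 ε l c x)) (G := fun x => F (x + (- ε)))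
      (a := c + ε) (b := c + l) (by linarith)
      (fun x h1 h2 => by
        simp only [T3]; rw [if_neg (by linarith), if_neg (by linarith)]; congr 1),
    intervalIntegral.integral_comp_add_right, intervalIntegral.integral_comp_add_right,
    intervalIntegral.integral_comp_add_right]
  have e1 : c + l - 1 + ε + (1 - ε) = c + l := by ring
  have e2 : c + l - 1 + ε + (1 - 2 * ε) = c + l - ε := by ring
  have e3 : c + ε + (1 - 2 * ε) = c + (1 - ε) := by ring
  have e4 : c + ε + -ε = c := by ring
  have e5 : c + l + -ε = c + l - ε := by ring
  rw [e1, e2, e3, e4, e5]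
  have h1 := intervalIntegral.integral_add_adjacent_intervals (i2 c (c + l - ε))
    (i2 (c + l - ε) (c + (1 - ε)))
  have h2 := intervalIntegral.integral_add_adjacent_intervals (i2 c (c + (1 - ε)))
    (i2 (c + (1 - ε)) (c + l))
  linarith

lemma int_iter (H : Ctx ε e l c) (g : Fin 3 → ℝ) (j : ℕ) :
    ∫ x in c..(c + l), g (letter3 ε l c ((T3 ε l c)^[j] x)) =
      g 0 * (l - 1 + ε) + g 1 * (1 - l) + g 2 * (l - ε) := by
  have hb : ∀ a, |g a| ≤ |g 0| + |g 1| + |g 2| := by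
    have h0 := abs_nonneg (g 0)
    have h1 := abs_nonneg (g 1)
    have h2 := abs_nonneg (g 2)
    intro a
    fin_cases a <;> simp <;> linarith
  have hm : ∀ j, Measurable fun x => g (letter3 ε l c ((T3 ε l c)^[j] x)) := by
    intro j
    exact (measurable_of_finite g).comp ((meas_letter3 ε l c).comp ((meas_T3 ε l c).iterate j))
  induction j with
  | succ j ih =>
    rw [← ih, ← int_T H (hm j) (fun x => hb _)]
    simp only [Function.iterate_succ_apply]
  | zero =>
    simp only [Function.iterate_zero, id]
    obtain ⟨_, _, hpos, hlt, he, hl1, hl2, hl3, _, _⟩ := H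
    have i1 := ii_of_bdd (F := fun x => g (letter3 ε l c x)) (hm 0) (fun x => hb _)
    rw [← intervalIntegral.integral_add_adjacent_intervals (i1 c (c + ε)) (i1 (c + ε) (c + l)),
    ← intervalIntegral.integral_add_adjacent_intervals (i1 c (c + l - 1 + ε))
      (i1 (c + l - 1 + ε) (c + ε)),
    congr_Ioo' (F := fun x => g (letter3 ε l c x)) (G := fun x => g 0) (a := c)
      (b := c + l - 1 + ε) (by linarith)
      (fun x h1 h2 => by simp only [letter3]; rw [if_pos h2]),
    congr_Ioo' (F := fun x => g (letter3 ε l c x)) (G := fun x => g 1)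
      (a := c + l - 1 + ε) (b := c + ε) (by linarith)
      (fun x h1 h2 => by simp only [letter3]; rw [if_neg (by linarith), if_pos h2]),
    congr_Ioo' (F := fun x => g (letter3 ε l c x)) (G := fun x => g 2)
      (a := c + ε) (b := c + l) (by linarith)
      (fun x h1 h2 => by
        simp only [letter3]; rw [if_neg (by linarith), if_neg (by linarith)])]
    simp only [intervalIntegral.integral_const, smul_eq_mul]
    ring

/-- bounded Birkhoff sums along the trajectory have mean zero -/
lemma mean_zero (H : Ctx ε e l c) (Y : Traj ε e l c u t τ) (g : Fin 3 → ℝ) (K : ℝ)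
    (hK : ∀ n m : ℕ, |∑ i ∈ Finset.range m, g (u (n + i))| ≤ K) :
    g 0 * (l - 1 + ε) + g 1 * (1 - l) + g 2 * (l - ε) = 0 := by
  set M := g 0 * (l - 1 + ε) + g 1 * (1 - l) + g 2 * (l - ε) with hM
  have hlpos : 0 < l := lt_trans H.pos H.l1
  have hall : ∀ x ∈ Set.Ico c (c + l), ∀ m : ℕ,
      |∑ i ∈ Finset.range m, g (letter3 ε l c ((T3 ε l c)^[i] x))| ≤ K := by
    intro x hx m
    obtain ⟨δ, hδ, h⟩ := itin_right ε l c x m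
    obtain ⟨n, _, h1, h2, _⟩ := Y.dense H hx hδ 1 one_pos 0
    have h3 := h (t n) h1.le h2
    convert hK n m using 2
    apply Finset.sum_congr rfl
    intro i hi
    rw [← h3 i (Finset.mem_range.mp hi), iter_t Y.step, ← Y.let3]
  have hb : ∀ a, |g a| ≤ |g 0| + |g 1| + |g 2| := by
    have h0 := abs_nonneg (g 0)
    have h1 := abs_nonneg (g 1)
    have h2 := abs_nonneg (g 2)
    intro a
    fin_cases a <;> simp <;> linarith
  have hm : ∀ j, Measurable fun x => g (letter3 ε l c ((T3 ε l c)^[j] x)) := by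
    intro j
    exact (measurable_of_finite g).comp ((meas_letter3 ε l c).comp ((meas_T3 ε l c).iterate j))
  have hmul : ∀ m : ℕ, |m * M| ≤ K * l := by
    intro m
    have h1 : ∫ x in c..(c + l), ∑ i ∈ Finset.range m, g (letter3 ε l c ((T3 ε l c)^[i] x))
        = m * M := by
      rw [intervalIntegral.integral_finsetSum]
      · simp only [int_iter H g, Finset.sum_const, Finset.card_range, nsmul_eq_mul, hM]
      · intro i _
        exact ii_of_bdd (hm i) (fun x => hb _) _ _
    have h2 : ‖∫ x in c..(c + l), ∑ i ∈ Finset.range m, g (letter3 ε l c ((T3 ε l c)^[i] x))‖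
        ≤ K * |c + l - c| := by
      rw [congr_Ioo' (G := fun x => if x < c + l then
        ∑ i ∈ Finset.range m, g (letter3 ε l c ((T3 ε l c)^[i] x)) else 0) (by linarith)
        (fun x _ hx => by rw [if_pos hx])]
      apply intervalIntegral.norm_integral_le_of_norm_le_const
      intro x hx
      rw [Set.uIoc_of_le (by linarith)] at hx
      split_ifs with h
      · exact hall x ⟨hx.1.le, h⟩ m
      · simp only [norm_zero]
        exact le_trans (abs_nonneg _) (hK 0 0)
    rw [h1, Real.norm_eq_abs, add_sub_cancel_left, abs_of_pos hlpos] at h2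
    exact h2
  by_contra hne
  have hMpos : 0 < |M| := abs_pos.mpr hne
  obtain ⟨m, hm⟩ := exists_nat_gt (K * l / |M|)
  rw [div_lt_iff₀ hMpos] at hm
  have := hmul m
  rw [abs_mul, Nat.abs_cast] at this
  linarith

/-- integral bounded cocycles are constant on a small interval, hence the mod D conclusion -/
lemma coc (H : Ctx ε e l c) (Y : Traj ε e l c u t τ) (D : ℕ) (hD : 0 < D) (P Q : ℤ) (K : ℤ)
    (w : Fin 3 → ℤ)
    (hw : ∀ a, ∃ z : ℤ, w a = D * z - P * (st a).2 + Q * (st a).1)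
    (hK : ∀ m : ℕ, |∑ i ∈ Finset.range m, w (u i)| ≤ K) :
    (D : ℤ) ∣ P ∧ (D : ℤ) ∣ Q := by
  set W : ℕ → ℤ := fun m => ∑ i ∈ Finset.range m, w (u i) with hW
  obtain ⟨n1, hn1⟩ : ∃ n1, ∀ n, W n1 ≤ W n := by
    obtain ⟨b, ⟨n1, hb⟩, h⟩ := Int.exists_least_of_bdd (P := fun z => ∃ n, W n = z)
      ⟨-K, fun z ⟨n, hn⟩ => by rw [← hn]; exact (abs_le.mp (hK n)).1⟩ ⟨_, 0, rfl⟩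
    exact ⟨n1, fun n => by rw [hb]; exact h _ ⟨n, rfl⟩⟩
  obtain ⟨n2, hn2⟩ : ∃ n2, ∀ n, W n ≤ W n2 := by
    obtain ⟨b, ⟨n1, hb⟩, h⟩ := Int.exists_greatest_of_bdd (P := fun z => ∃ n, W n = z)
      ⟨K, fun z ⟨n, hn⟩ => by rw [← hn]; exact (abs_le.mp (hK n)).2⟩ ⟨_, 0, rfl⟩
    exact ⟨n1, fun n => by rw [hb]; exact h _ ⟨n, rfl⟩⟩
  obtain ⟨na, L, hconst⟩ : ∃ na L : ℕ, ∀ m : ℕ, W (m + L) - W m = W (na + L) - W na →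
      W m = W na := by
    rcases le_total n1 n2 with h | h
    · obtain ⟨L, rfl⟩ := Nat.exists_eq_add_of_le h
      refine ⟨n1, L, fun m hm => ?_⟩
      have := hn1 m
      have := hn2 (m + L)
      omega
    · obtain ⟨L, rfl⟩ := Nat.exists_eq_add_of_le h
      refine ⟨n2, L, fun m hm => ?_⟩
      have := hn2 m
      have := hn1 (m + L)
      omega
  have hWd : ∀ m L : ℕ, W (m + L) - W m = ∑ i ∈ Finset.range L, w (u (m + i)) := by
    intro m L
    simp only [hW]
    rw [Finset.sum_range_add]
    push_cast; ring
  obtain ⟨δ, hδ, hit⟩ := itin_right ε l c (t na) L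
  have hc2 : ∀ m : ℕ, t na ≤ t m → t m < t na + δ → W m = W na := by
    intro m h1 h2
    apply hconst
    rw [hWd, hWd]
    apply Finset.sum_congr rfl
    intro i hi
    have := hit (t m) h1 h2 i (Finset.mem_range.mp hi)
    rw [iter_t Y.step, iter_t Y.step, ← Y.let3, ← Y.let3] at this
    rw [this]
  have hWm : ∀ m : ℕ, ∃ z : ℤ, W m = D * z - P * (τ m).2 + Q * (τ m).1 := by
    intro m
    induction m with
    | zero => exact ⟨0, by simp [hW, Y.tau0]⟩
    | succ m ih =>
      obtain ⟨z, hz⟩ := ih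
      obtain ⟨z', hz'⟩ := hw (u m)
      refine ⟨z + z', ?_⟩
      have h1 : W (m + 1) = W m + w (u m) := by simp [hW, Finset.sum_range_succ]
      have h2 := Y.tstep m
      push_cast
      rw [h1, hz, hz', h2, Prod.snd_add, Prod.fst_add]
      ring
  have hall : ∀ s : ℤ × ℤ, ∃ z : ℤ, W na = D * z - P * s.2 + Q * s.1 := by
    intro s
    obtain ⟨n, q, h1, h2, h3⟩ := Y.dense H (Y.mem na) hδ D hD s
    obtain ⟨z, hz⟩ := hWm n
    rw [hc2 n h1.le h2, h3] at hz
    refine ⟨z - P * q.2 + Q * q.1, ?_⟩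
    rw [hz]
    simp
    ring
  obtain ⟨z0, h0⟩ := hall 0
  obtain ⟨z1, h1⟩ := hall (0, 1)
  obtain ⟨z2, h2⟩ := hall (1, 0)
  simp at h0 h1 h2
  exact ⟨⟨z1 - z0, by linarith⟩, ⟨z0 - z2, by linarith⟩⟩

lemma lin_struct (H : Ctx ε e l c) (Y : Traj ε e l c u t τ) (p₂ q₂ : ℚ)
    (hlQ : l = (p₂ : ℝ) + (q₂ : ℝ) * ε) (hnd : l ∉ Zbr ε) (k : ℤ → ℤ) (Φ : Fin 3 → ℤ × ℤ)
    (hΦ : ∀ n, τ (k (n + 1)) = τ (k n) + Φ (u n)) :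
    ∀ a, vl ε (Φ a) = vl ε (Φ 0 - Φ 2) * vl ε (st a) := by
  have hlpos : 0 < l := lt_trans H.pos H.l1
  have hsum : ∀ (n : ℤ) (m : ℕ), ∑ i ∈ Finset.range m, vl ε (Φ (u (n + i))) =
      t (k (n + m)) - t (k n) := by
    intro n m
    induction m with
    | zero => simp
    | succ m ih =>
      rw [Finset.sum_range_succ, ih]
      have := hΦ (n + m)
      have h2 : t (k (n + m + 1)) = t (k (n + m)) + vl ε (Φ (u (n + m))) := by
        rw [Y.val, this, vl_add, ← Y.val]
      push_cast
      rw [← add_assoc, h2]; ring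
  have hbd : ∀ a b, |t a - t b| ≤ l := by
    intro a b
    have h1 := Y.mem a
    have h2 := Y.mem b
    rw [abs_le]
    constructor <;> linarith [h1.1, h1.2, h2.1, h2.2]
  have hmean := mean_zero H Y (fun a => vl ε (Φ a)) l (fun n m => by rw [hsum]; exact hbd _ _)
  set x := vl ε (Φ 0) with hx
  set y := vl ε (Φ 2) with hy
  obtain ⟨γ, hγ⟩ : ∃ γ, γ = vl ε (Φ 1) - x - y := ⟨_, rfl⟩
  have hmean' : x * ε + y * (1 - ε) + γ * (1 - l) = 0 := by
    rw [hγ]; linarith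
  have hγ0 : γ = 0 := by
    by_contra hγ0
    apply hnd
    set D : ℕ := p₂.den * q₂.den with hDdef
    have hD : 0 < D := Nat.mul_pos p₂.pos q₂.pos
    have hDr : (0 : ℝ) < D := by exact_mod_cast hD
    set P : ℤ := p₂.num * q₂.den with hP
    set Q : ℤ := q₂.num * p₂.den with hQ
    have hPr : (P : ℝ) = D * p₂ := by
      have : (P : ℚ) = D * p₂ := by
        rw [hP, hDdef]; push_cast
        have := Rat.mul_den_eq_num p₂
        linear_combination (-(q₂.den : ℚ)) * this
      exact_mod_cast this
    have hQr : (Q : ℝ) = D * q₂ := by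
      have : (Q : ℚ) = D * q₂ := by
        rw [hQ, hDdef]; push_cast
        have := Rat.mul_den_eq_num q₂
        linear_combination (-(p₂.den : ℚ)) * this
      exact_mod_cast this
    let w : Fin 3 → ℤ := fun a =>
      D * (if a = 1 then 1 else 0) + (D - P) * (st a).2 + Q * (st a).1
    have hwr : ∀ a, (w a : ℝ) * γ = D * (vl ε (Φ a) - (x - y) * vl ε (st a))
        + γ * Q * vl ε (st a) := by
      intro a
      have hgam : vl ε (Φ 1) = γ + x + y := by rw [hγ]; ring
      have hl1 : (D : ℝ) * l = P + Q * ε := by rw [hPr, hQr, hlQ]; ring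
      fin_cases a
      · simp [w, st, ← hx]
        simp only [vl]; push_cast
        linear_combination -γ * hl1 - D * hmean'
      · simp [w, st]
        rw [hgam]
        simp only [vl]; push_cast
        linear_combination -2 * γ * hl1 - 2 * D * hmean'
      · simp [w, st, ← hy]
        simp only [vl]; push_cast
        linear_combination -γ * hl1 - D * hmean'
    have htsum : ∀ m : ℕ, ∑ i ∈ Finset.range m, vl ε (st (u i)) = t m := by
      intro m
      induction m with
      | zero => simp [Y.t0]
      | succ m ih =>
        rw [Finset.sum_range_succ, ih, Y.val, Y.val, ← vl_add, ← Y.tstep]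
        push_cast; rfl
    have hWsum : ∀ m : ℕ, ((∑ i ∈ Finset.range m, w (u i) : ℤ) : ℝ) * γ =
        D * (t (k m) - t (k 0)) + (γ * Q - D * (x - y)) * t m := by
      intro m
      have h1 := hsum 0 m
      simp only [zero_add] at h1
      rw [← h1, ← htsum]
      push_cast
      rw [Finset.sum_mul, Finset.mul_sum, Finset.mul_sum, ← Finset.sum_add_distrib]
      apply Finset.sum_congr rfl
      intro i _
      rw [hwr]; ring
    have hγpos : 0 < |γ| := abs_pos.mpr hγ0
    obtain ⟨K, hK⟩ := exists_int_gt ((D * l + |γ * Q - D * (x - y)| * l) / |γ|)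
    rw [div_lt_iff₀ hγpos] at hK
    have hbound : ∀ m : ℕ, |∑ i ∈ Finset.range m, w (u i)| ≤ K := by
      intro m
      have h1 : |((∑ i ∈ Finset.range m, w (u i) : ℤ) : ℝ)| * |γ| ≤ K * |γ| := by
        rw [← abs_mul, hWsum]
        refine le_trans (abs_add_le _ _) (le_trans ?_ hK.le)
        rw [abs_mul, abs_mul, Nat.abs_cast]
        have h2 := hbd (k m) (k 0)
        have h3 := hbd m 0
        rw [Y.t0, sub_zero] at h3
        gcongr
      have h2 := le_of_mul_le_mul_right h1 hγpos
      exact_mod_cast h2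
    obtain ⟨⟨a, ha⟩, ⟨b, hb⟩⟩ := coc H Y D hD P Q K w (fun a => by
      refine ⟨(if a = 1 then 1 else 0) + (st a).2, ?_⟩
      simp only [w]; ring) hbound
    refine ⟨a, b, ?_⟩
    have h1 : (D : ℝ) * a = D * p₂ := by rw [← hPr, ha]; push_cast; ring
    have h2 : (D : ℝ) * b = D * q₂ := by rw [← hQr, hb]; push_cast; ring
    rw [hlQ, mul_left_cancel₀ hDr.ne' h1, mul_left_cancel₀ hDr.ne' h2]
  rw [hγ0] at hmean' hγ
  intro a
  rw [vl_sub, ← hx, ← hy]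
  fin_cases a
  · simp only [vl, st] at hx ⊢
    simp at hx ⊢
    linear_combination hmean' - hx
  · simp only [vl, st] at hγ ⊢
    simp at hγ ⊢
    linear_combination 2 * hmean' - hγ
  · simp only [vl, st] at hy ⊢
    simp at hy ⊢
    linear_combination hmean' - hy
end fwd
section fwd2
variable {ε e l c : ℝ} {u : ℤ → Fin 3} {t : ℤ → ℝ} {τ : ℤ → ℤ × ℤ} {f : ℤ × ℤ → ℤ × ℤ} {μ Λ : ℝ}
  {k : ℤ → ℤ} {r : Fin 3 → ℕ} {W : Fin 3 → ℕ → Fin 3}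

lemma f_add (H : Ctx ε e l c) (hv : ∀ p, vl ε (f p) = μ * vl ε p) (p q : ℤ × ℤ) :
    f (p + q) = f p + f q := by
  apply vl_inj H.irr
  rw [hv, vl_add, vl_add, hv, hv]; ring

lemma f_sub (H : Ctx ε e l c) (hv : ∀ p, vl ε (f p) = μ * vl ε p) (p q : ℤ × ℤ) :
    f (p - q) = f p - f q := by
  apply vl_inj H.irr
  rw [hv, vl_sub, vl_sub, hv, hv]; ring

lemma scale_mem (H : Ctx ε e l c) (hμ0 : 0 < μ) (hμ1 : μ < 1) {y : ℝ}
    (hy : y ∈ Set.Ico c (c + l)) : μ * y ∈ Set.Ico c (c + l) := by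
  have h1 := H.c1
  have h2 := H.c2
  exact ⟨by nlinarith [hy.1], by nlinarith [hy.2]⟩

lemma block_real (H : Ctx ε e l c) (Y : Traj ε e l c u t τ) (hμ0 : 0 < μ)
    (hv : ∀ p, vl ε (f p) = μ * vl ε p) (hk : ∀ n, τ (k n) = f (τ n))
    (hr : ∀ n, k (n + 1) = k n + r (u n))
    (hW : ∀ n, ∀ i : ℕ, i < r (u n) → u (k n + i) = W (u n) i)
    {y : ℝ} (hy : y ∈ Set.Ico c (c + l)) :
    (∀ i < r (letter3 ε l c y),
      letter3 ε l c ((T3 ε l c)^[i] (μ * y)) = W (letter3 ε l c y) i) ∧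
    dsp ε l c (μ * y) (r (letter3 ε l c y)) = f (st (letter3 ε l c y)) := by
  set a := letter3 ε l c y with ha
  obtain ⟨δ1, hδ1, h1⟩ := itin_right ε l c (μ * y) (r a)
  obtain ⟨δ2, hδ2, h2⟩ := letter_right ε l c y
  have hδ : 0 < min δ2 (δ1 / μ) := lt_min hδ2 (by positivity)
  obtain ⟨n, _, h3, h4, _⟩ := Y.dense H hy hδ 1 one_pos 0
  have hun : u n = a := by
    rw [Y.let3]
    exact h2 _ h3.le (lt_of_lt_of_le h4 (by gcongr; exact min_le_left _ _))
  have htk : t (k n) = μ * t n := by rw [Y.val, hk, hv, ← Y.val]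
  have h5 : t n < y + δ1 / μ := lt_of_lt_of_le h4 (by gcongr; exact min_le_right _ _)
  have h6 : t (k n) < μ * y + δ1 := by
    rw [htk]
    have := mul_lt_mul_of_pos_left h5 hμ0
    rwa [mul_add, mul_div_cancel₀ _ hμ0.ne'] at this
  have h7 := h1 (t (k n)) (by rw [htk]; gcongr) h6
  constructor
  · intro i hi
    rw [← h7 i hi, iter_t Y.step, ← Y.let3, hW n i (by rw [hun]; exact hi), hun]
  · rw [← dsp_congr h7]
    have h8 := Y.tau_dsp (k n) (r a)
    have h9 : k (n : ℤ) + (r a : ℤ) = k (n + 1) := by rw [hr, hun]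
    rw [h9, hk, hk, Y.tstep, f_add H hv, hun] at h8
    exact (add_left_cancel h8).symm

lemma left_pt {y : ℝ} (hy : c ≤ y) (h0 : y ≠ c) (h1 : y ≠ c + ε)
    (h2 : y ≠ c + l - (1 - ε)) (H : Ctx ε e l c) :
    ∃ y1, c ≤ y1 ∧ y1 < y ∧ letter3 ε l c y1 = letter3 ε l c y := by
  obtain ⟨_, _, hpos, hlt, he, hl1, hl2, hl3, _, _⟩ := H
  have h0' : c < y := lt_of_le_of_ne hy (Ne.symm h0)
  unfold letter3
  split_ifs with h3 h4
  · exact ⟨c, le_rfl, h0', by rw [if_pos (by linarith)]⟩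
  · have h5 : c + l - 1 + ε < y := lt_of_le_of_ne (not_lt.mp h3) (fun h => h2 (by linarith))
    exact ⟨c + l - 1 + ε, by linarith, h5, by rw [if_neg (by linarith), if_pos (by linarith)]⟩
  · have h5 : c + ε < y := lt_of_le_of_ne (not_lt.mp h4) (fun h => h1 (by linarith))
    exact ⟨c + ε, by linarith, h5, by rw [if_neg (by linarith), if_neg (by linarith)]⟩

lemma anc (H : Ctx ε e l c) (Y : Traj ε e l c u t τ) (hμ0 : 0 < μ) (hμ1 : μ < 1) (hΛ : 1 < Λ)
    (hv : ∀ p, vl ε (f p) = μ * vl ε p) (hc : ∀ p, vl e (f p) = Λ * vl e p)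
    (hk : ∀ n, τ (k n) = f (τ n))
    (hr : ∀ n, k (n + 1) = k n + r (u n))
    (hW : ∀ n, ∀ i : ℕ, i < r (u n) → u (k n + i) = W (u n) i)
    {d : ℝ} (hd : d = c + ε ∨ d = c + l - (1 - ε)) (s : ℤ × ℤ) :
    ∃ (y : ℝ) (q : ℤ × ℤ) (j : ℕ), y ∈ Set.Ico c (c + l) ∧ j < r (letter3 ε l c y) ∧
      (T3 ε l c)^[j] (μ * y) = d ∧ μ * y = d + vl ε (s + f q) ∧
      (y = c ∨ y = c + ε ∨ y = c + l - (1 - ε)) := by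
  have hΛ0 : 0 < Λ := by linarith
  have hdm : d ∈ Set.Ico c (c + l) := by
    obtain ⟨_, _, hpos, hlt, he, hl1, hl2, hl3, _, _⟩ := H
    rcases hd with rfl | rfl <;> constructor <;> linarith
  have hlpos : 0 < l := lt_trans H.pos H.l1
  have hab : (μ * c - d - vl ε s) / μ < (μ * (c + l) - d - vl ε s) / μ := by
    gcongr; linarith
  obtain ⟨q0, h1, h2, h3⟩ := dens_lo H.irr H.eltε hab 1 one_pos 0 (- vl e s / Λ)
  simp only [one_smul, zero_add] at h1 h2 h3
  rw [div_lt_iff₀ hμ0] at h1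
  rw [lt_div_iff₀ hμ0] at h2
  rw [lt_div_iff₀ hΛ0] at h3
  set y0 := (d + vl ε (s + f q0)) / μ with hy0
  have hy0μ : μ * y0 = d + vl ε s + μ * vl ε q0 := by
    rw [hy0, mul_div_cancel₀ _ hμ0.ne', vl_add, hv]; ring
  have hy0m : y0 ∈ Set.Ico c (c + l) := by
    constructor
    · apply le_of_mul_le_mul_left _ hμ0
      linarith
    · apply lt_of_mul_lt_mul_left _ hμ0.le
      linarith
  have hex : ∃ i, 0 < vl e s + Λ * (vl e q0 + vl e (dsp ε l c y0 i)) := by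
    have he : 0 < -e := by linarith [H.eneg]
    obtain ⟨n, hn⟩ := exists_nat_gt ((-(vl e s / Λ) - vl e q0) / (-e))
    rw [div_lt_iff₀ he] at hn
    have h4 := H.dsp_ge y0 n
    refine ⟨n, ?_⟩
    have h5 : -(vl e s / Λ) < vl e q0 + vl e (dsp ε l c y0 n) := by linarith
    have h6 := mul_lt_mul_of_pos_left h5 hΛ0
    have h7 : Λ * -(vl e s / Λ) = - vl e s := by field_simp
    linarith
  classical
  have hsp := Nat.find_spec hex
  have hmn := @Nat.find_min _ _ hex
  set n := Nat.find hex with hn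
  rcases n with _ | i
  · rw [dsp_zero, vl_zero] at hsp; linarith
  have h4 := hmn (Nat.lt_succ_self i)
  push Not at h4
  set y := (T3 ε l c)^[i] y0 with hy
  have hym : y ∈ Set.Ico c (c + l) := H.iter_mem hy0m i
  obtain ⟨hb1, hb2⟩ := block_real H Y hμ0 hv hk hr hW hym
  set q := q0 + dsp ε l c y0 i with hq
  have hyw : μ * y = d + vl ε (s + f q) := by
    rw [hy, iter_eq, mul_add, hy0μ, vl_add, hv, hq, vl_add]; ring
  have hcw : vl e (s + f q) = vl e s + Λ * (vl e q0 + vl e (dsp ε l c y0 i)) := by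
    rw [vl_add, hc, hq, vl_add]
  rw [dsp_succ, vl_add] at hsp
  obtain ⟨j, hj⟩ := H.orbit (scale_mem H hμ0 hμ1 hym) (p := -(s + f q))
    (by rw [vl_neg, hcw]; linarith) (by rw [vl_neg, hyw]; convert hdm using 1; ring)
  have hjr : j < r (letter3 ε l c y) := by
    apply (H.dsp_mono (μ * y)).lt_iff_lt.mp
    show vl e _ < vl e _
    rw [hj, hb2, hc, vl_neg, hcw]
    linarith
  have hTj : (T3 ε l c)^[j] (μ * y) = d := by
    rw [iter_eq, hj, vl_neg, hyw]; ring
  refine ⟨y, q, j, hym, hjr, hTj, hyw, ?_⟩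
  by_contra hcon
  push Not at hcon
  obtain ⟨y1, h5, h6, h7⟩ := left_pt hym.1 hcon.1 hcon.2.1 hcon.2.2 H
  have hy1m : y1 ∈ Set.Ico c (c + l) := ⟨h5, lt_trans h6 hym.2⟩
  obtain ⟨hb3, hb4⟩ := block_real H Y hμ0 hv hk hr hW hy1m
  rw [h7] at hb3
  have hD : dsp ε l c (μ * y1) j = dsp ε l c (μ * y) j := by
    apply dsp_congr
    intro i' hi'
    rw [hb3 i' (by omega), hb1 i' (by omega)]
  have hL := hb3 j hjr
  rw [← hb1 j hjr] at hL
  refine disc_letter_ne H.l3 hd ?_ hTj.ge hL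
  rw [← hTj, iter_eq, iter_eq, hD]
  have := mul_lt_mul_of_pos_left h6 hμ0
  linarith

lemma zbr_iff (x : ℝ) : x ∈ Zbr ε ↔ ∃ p, x = vl ε p :=
  ⟨fun ⟨a, b, h⟩ => ⟨(a, b), h⟩, fun ⟨p, h⟩ => ⟨p.1, p.2, h⟩⟩

lemma f_surj (H : Ctx ε e l c) (Y : Traj ε e l c u t τ) (hμ0 : 0 < μ) (hμ1 : μ < 1) (hΛ : 1 < Λ)
    (hv : ∀ p, vl ε (f p) = μ * vl ε p) (hc : ∀ p, vl e (f p) = Λ * vl e p)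
    (hk : ∀ n, τ (k n) = f (τ n))
    (hr : ∀ n, k (n + 1) = k n + r (u n))
    (hW : ∀ n, ∀ i : ℕ, i < r (u n) → u (k n + i) = W (u n) i) (hnd : l ∉ Zbr ε) :
    Function.Surjective f := by
  -- if all base points are the second discontinuity then we are done
  have fin : ∀ d, (∀ s, ∃ q, μ * (c + l - (1 - ε)) = d + vl ε (s + f q)) →
      Function.Surjective f := by
    intro d h s
    obtain ⟨q, hq⟩ := h s
    obtain ⟨q0, hq0⟩ := h 0
    have h1 : s + f q = 0 + f q0 := vl_inj H.irr (by linarith)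
    refine ⟨q0 - q, ?_⟩
    rw [f_sub H hv, sub_eq_iff_eq_add, h1, zero_add]
  have hf1 : vl ε (f (0, 1)) = μ * ε := by rw [hv]; simp [vl]
  -- normal form of the anc lemma
  have nf : ∀ d, (d = c + ε ∨ d = c + l - (1 - ε)) → ∀ s,
      (∃ p, μ * c = d + vl ε p) ∨ ∃ q, μ * (c + l - (1 - ε)) = d + vl ε (s + f q) := by
    intro d hd s
    obtain ⟨y, q, j, _, _, _, h1, h2⟩ := anc H Y hμ0 hμ1 hΛ hv hc hk hr hW hd s
    rcases h2 with h | h | h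
    · left; exact ⟨_, by rw [← h, h1]⟩
    · left
      refine ⟨s + f q - f (0, 1), ?_⟩
      rw [vl_sub, hf1]
      rw [h] at h1
      linarith
    · right; exact ⟨q, by rw [← h, h1]⟩
  by_cases hA : ∃ p, μ * c = c + ε + vl ε p
  · obtain ⟨p, hp⟩ := hA
    apply fin (c + l - (1 - ε))
    intro s
    rcases nf _ (Or.inr rfl) s with ⟨p', hp'⟩ | h
    · exfalso
      apply hnd
      rw [zbr_iff]
      refine ⟨(1, 0) + (p - p'), ?_⟩
      rw [vl_add, vl_sub]
      have : vl ε (1, 0) = 1 := by simp [vl]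
      rw [this]
      linarith
    · exact h
  · apply fin (c + ε)
    intro s
    rcases nf _ (Or.inl rfl) s with h | h
    · exact absurd h hA
    · exact h

lemma c2_holds (H : Ctx ε e l c) (Y : Traj ε e l c u t τ) (hμ0 : 0 < μ) (hμ1 : μ < 1)
    (hΛ : 1 < Λ)
    (hv : ∀ p, vl ε (f p) = μ * vl ε p) (hc : ∀ p, vl e (f p) = Λ * vl e p)
    (hk : ∀ n, τ (k n) = f (τ n))
    (hr : ∀ n, k (n + 1) = k n + r (u n))
    (hW : ∀ n, ∀ i : ℕ, i < r (u n) → u (k n + i) = W (u n) i)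
    (hs : Function.Surjective f)
    {d : ℝ} (hd : d = c + ε ∨ d = c + l - (1 - ε)) :
    ∃ z, IsAncestor ε l c (Set.Ico (μ * c) (μ * (c + l))) d z ∧
        z ∈ ({μ * c, μ * (c + ε), μ * (c + l - (1 - ε))} : Set ℝ) := by
  have hΛ0 : 0 < Λ := by linarith
  obtain ⟨y, q, j, hy, hj, hT, -, h2⟩ := anc H Y hμ0 hμ1 hΛ hv hc hk hr hW hd 0
  obtain ⟨hb1, hb2⟩ := block_real H Y hμ0 hv hk hr hW hy
  refine ⟨μ * y, ⟨⟨mul_le_mul_of_nonneg_left hy.1 hμ0.le, mul_lt_mul_of_pos_left hy.2 hμ0⟩, j, hT,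
    ?_⟩, ?_⟩
  · intro j' hj1 hj2 hin
    obtain ⟨q', hq'⟩ := hs (dsp ε l c (μ * y) j')
    rw [iter_eq, ← hq', hv, ← mul_add] at hin
    have h3 : y + vl ε q' ∈ Set.Ico c (c + l) :=
      ⟨le_of_mul_le_mul_left hin.1 hμ0, lt_of_mul_lt_mul_left hin.2 hμ0.le⟩
    have h4 : vl e (dsp ε l c (μ * y) 0) < vl e (dsp ε l c (μ * y) j') :=
      H.dsp_mono (μ * y) (by omega)
    rw [dsp_zero, vl_zero, ← hq', hc] at h4
    have h5 := H.succ_le hy (pos_of_mul_pos_right h4 hΛ0.le) h3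
    have h6 : vl e (dsp ε l c (μ * y) j') < vl e (dsp ε l c (μ * y) (r (letter3 ε l c y))) :=
      H.dsp_mono (μ * y) (by omega)
    rw [← hq', hb2, hc, hc] at h6
    have := lt_of_mul_lt_mul_left h6 hΛ0.le
    linarith
  · simp only [Set.mem_insert_iff, Set.mem_singleton_iff]
    rcases h2 with h | h | h
    · left; rw [h]
    · right; left; rw [h]
    · right; right; rw [h]
end fwd2
lemma conjmul {ε e : ℝ} {A B C : ℤ} (hε : Irrational ε)
    (h1 : (A : ℝ) * ε ^ 2 + (B : ℝ) * ε + (C : ℝ) = 0)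
    (h2 : (A : ℝ) * e ^ 2 + (B : ℝ) * e + (C : ℝ) = 0) (hA : A ≠ 0)
    (m a x : ℤ × ℤ) (h : vl ε m * vl ε a = vl ε x) : vl e m * vl e a = vl e x := by
  have hA' : (A : ℝ) ≠ 0 := by exact_mod_cast hA
  have h3 : vl ε (A * (m.1 * a.1 - x.1) - m.2 * a.2 * C,
      A * (m.1 * a.2 + m.2 * a.1 - x.2) - m.2 * a.2 * B) = 0 := by
    simp only [vl] at h ⊢
    push_cast
    linear_combination (A : ℝ) * h - (m.2 : ℝ) * a.2 * h1
  have h4 := vl_eq_zero hε h3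
  have h5 : vl e (A * (m.1 * a.1 - x.1) - m.2 * a.2 * C,
      A * (m.1 * a.2 + m.2 * a.1 - x.2) - m.2 * a.2 * B) = 0 := by rw [h4, vl_zero]
  apply mul_left_cancel₀ hA'
  simp only [vl] at h5 ⊢
  push_cast at h5
  linear_combination h5 + (m.2 : ℝ) * a.2 * h2

/-- `w` occurs in `u` at position `m`. -/
def occ (u : ℤ → Fin 3) : List (Fin 3) → ℤ → Prop
  | [], _ => True
  | a :: w, m => u m = a ∧ occ u w (m + 1)

lemma occ_append (u : ℤ → Fin 3) (v w : List (Fin 3)) (m : ℤ) (h1 : occ u v m)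
    (h2 : occ u w (m + v.length)) : occ u (v ++ w) m := by
  induction v generalizing m with
  | nil => simpa using h2
  | cons a v ih =>
    refine ⟨h1.1, ih _ h1.2 ?_⟩
    convert h2 using 1
    simp only [List.length_cons]; push_cast; ring

lemma occ_of (u : ℤ → Fin 3) (w : List (Fin 3)) (m : ℤ)
    (h : ∀ i : ℕ, (hi : i < w.length) → u (m + i) = w.get ⟨i, hi⟩) : occ u w m := by
  induction w generalizing m with
  | nil => trivial
  | cons a w ih =>
    refine ⟨by simpa using h 0 (by simp), ih _ fun i hi => ?_⟩
    have := h (i + 1) (by simpa using hi)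
    simp only [List.get_eq_getElem, List.getElem_cons_succ] at this ⊢
    rw [← this]; congr 1; push_cast; ring

lemma occ_get (u : ℤ → Fin 3) (w : List (Fin 3)) (m : ℤ) (h : occ u w m) (i : ℕ)
    (hi : i < w.length) : u (m + i) = w.getD i 0 := by
  induction w generalizing m i with
  | nil => simp at hi
  | cons a w ih =>
    cases i with
    | zero => simpa using h.1
    | succ i =>
      have := ih _ h.2 i (by simpa using hi)
      rw [List.getD_cons_succ, ← this]; congr 1; push_cast; ring

lemma occ_subst {u : ℤ → Fin 3} {φ : Fin 3 → List (Fin 3)} {k : ℤ → ℤ}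
    (hstep : ∀ n, k (n + 1) = k n + (φ (u n)).length)
    (hlet : ∀ n : ℤ, ∀ i : ℕ, (h : i < (φ (u n)).length) → u (k n + i) = (φ (u n)).get ⟨i, h⟩)
    (w : List (Fin 3)) (m : ℤ) (h : occ u w m) :
    occ u (substWord φ w) (k m) ∧ k (m + w.length) = k m + (substWord φ w).length := by
  induction w generalizing m with
  | nil => simp [substWord, occ]
  | cons a w ih =>
    obtain ⟨h1, h2⟩ := h
    obtain ⟨i1, i2⟩ := ih _ h2
    have h3 := hstep m
    have h4 := occ_of u _ _ (hlet m)
    rw [h1] at h3 h4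
    have e1 : substWord φ (a :: w) = φ a ++ substWord φ w := by simp [substWord]
    rw [e1]
    refine ⟨occ_append _ _ _ _ h4 (h3 ▸ i1), ?_⟩
    have e2 : m + ((a :: w).length : ℤ) = m + 1 + w.length := by
      simp only [List.length_cons]; push_cast; ring
    rw [e2, i2, h3, List.length_append]; push_cast; ring

lemma occ_tau {u : ℤ → Fin 3} {τ : ℤ → ℤ × ℤ} (h0 : ∀ n, τ (n + 1) = τ n + st (u n))
    (w : List (Fin 3)) (m : ℤ) (h : occ u w m) :
    τ (m + w.length) = τ m + (w.map st).sum := by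
  induction w generalizing m with
  | nil => simp
  | cons a w ih =>
    have e2 : m + ((a :: w).length : ℤ) = m + 1 + w.length := by
      simp only [List.length_cons]; push_cast; ring
    rw [e2, ih _ h.2, h0, h.1, List.map_cons, List.sum_cons, add_assoc]

lemma vl_sum (x : ℝ) (w : List (Fin 3)) :
    vl x (w.map st).sum = (w.map fun a => vl x (st a)).sum := by
  induction w with
  | nil => simp [vl_zero]
  | cons a w ih => simp [vl_add, ih]

lemma fwd_dir {ε e l c : ℝ} {u : ℤ → Fin 3} {t : ℤ → ℝ} {τ : ℤ → ℤ × ℤ}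
    (H : Ctx ε e l c) (Y : Traj ε e l c u t τ) (p₂ q₂ : ℚ)
    (hlQ : l = (p₂ : ℝ) + (q₂ : ℝ) * ε) (hnd : l ∉ Zbr ε)
    (cm : ∀ m a x : ℤ × ℤ, vl ε m * vl ε a = vl ε x → vl e m * vl e a = vl e x)
    (φ : Fin 3 → List (Fin 3)) (hφ : IsPrimitiveSubst φ) (hfix : IsFixedPointSubstZ φ u) :
    ∃ (f : ℤ × ℤ → ℤ × ℤ) (μ Λ : ℝ), 0 < μ ∧ μ < 1 ∧ 1 < Λ ∧ (∀ p, vl ε (f p) = μ * vl ε p) ∧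
      (∀ p, vl e (f p) = Λ * vl e p) ∧ Function.Surjective f ∧
      ∀ d, (d = c + ε ∨ d = c + l - (1 - ε)) →
      ∃ z, IsAncestor ε l c (Set.Ico (μ * c) (μ * (c + l))) d z ∧
        z ∈ ({μ * c, μ * (c + ε), μ * (c + l - (1 - ε))} : Set ℝ) := by
  obtain ⟨k, hmono, k0, hstep, hlet⟩ := hfix
  set Φ : Fin 3 → ℤ × ℤ := fun a => ((φ a).map st).sum with hΦdef
  have hΦ : ∀ n, τ (k (n + 1)) = τ (k n) + Φ (u n) := by
    intro n
    rw [hstep]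
    exact occ_tau Y.tstep _ _ (occ_of u _ _ (hlet n))
  have hlin := lin_struct H Y p₂ q₂ hlQ hnd k Φ hΦ
  set m₁ := Φ 0 - Φ 2 with hm₁
  set μ₁ := vl ε m₁ with hμ₁
  set L := vl e m₁ with hL
  have hlin' : ∀ a, vl e (Φ a) = L * vl e (st a) := fun a => (cm _ _ _ (hlin a).symm).symm
  -- lengths
  have hlen : ∀ w : List (Fin 3), ((substWord φ w).map fun a => vl e (st a)).sum =
      L * (w.map fun a => vl e (st a)).sum := by
    intro w
    induction w with
    | nil => simp [substWord]
    | cons a w ih =>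
      have e1 : substWord φ (a :: w) = φ a ++ substWord φ w := by simp [substWord]
      rw [e1, List.map_append, List.sum_append, ih, ← vl_sum]
      have := hlin' a
      simp only [hΦdef] at this
      rw [this, List.map_cons, List.sum_cons]; ring
  have hlenn : ∀ n : ℕ, (((substWord φ)^[n] [0]).map fun a => vl e (st a)).sum =
      L ^ n * vl e (st 0) := by
    intro n
    induction n with
    | zero => simp
    | succ n ih => rw [Function.iterate_succ_apply', hlen, ih, pow_succ]; ring
  have hnn : ∀ w : List (Fin 3), ∀ x ∈ w.map fun a => vl e (st a), 0 ≤ x := by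
    intro w x hx
    obtain ⟨a, _, rfl⟩ := List.mem_map.mp hx
    exact (H.stpos' a).le
  have hL0 : 0 ≤ L := by
    have h1 := hlen [0]
    have h2 : 0 ≤ ((substWord φ [0]).map fun a => vl e (st a)).sum := List.sum_nonneg (hnn _)
    rw [h1] at h2
    simp only [List.map_cons, List.map_nil, List.sum_cons, List.sum_nil, add_zero] at h2
    exact nonneg_of_mul_nonneg_left h2 (H.stpos' 0)
  have hL1 : 1 < L := by
    obtain ⟨n, hn, hp⟩ := hφ
    by_contra hcon
    have h1 : L ^ n ≤ 1 := pow_le_one₀ hL0 (not_lt.mp hcon)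
    have h2 : vl e (st 1) ≤ L ^ n * vl e (st 0) := by
      rw [← hlenn]
      exact List.single_le_sum (hnn _) _ (List.mem_map.mpr ⟨1, hp 0 1, rfl⟩)
    have h3 : L ^ n * vl e (st 0) ≤ 1 * vl e (st 0) :=
      mul_le_mul_of_nonneg_right h1 (H.stpos' 0).le
    have h4 := H.eneg
    simp [vl, st] at h2 h3
    linarith
  have hμ0 : μ₁ ≠ 0 := by
    intro h
    have := vl_eq_zero H.irr h
    rw [hL, this, vl_zero] at hL1
    linarith
  -- the linear map
  set f₁ : ℤ × ℤ → ℤ × ℤ := fun p => p.1 • m₁ - p.2 • Φ 2 with hf₁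
  have hs2 : vl ε (Φ 2) = -(μ₁ * ε) := by rw [hlin 2]; simp [vl, st, hμ₁]
  have hsm : ∀ (z : ℤ) (p : ℤ × ℤ), vl ε (z • p) = z * vl ε p := by
    intro z p; simp [vl]; ring
  have hv₁ : ∀ p, vl ε (f₁ p) = μ₁ * vl ε p := by
    intro p
    simp only [hf₁]
    rw [vl_sub, hsm, hsm, hs2, ← hμ₁]
    simp only [vl]; ring
  have hc₁ : ∀ p, vl e (f₁ p) = L * vl e p := fun p => (cm _ _ _ (hv₁ p).symm).symm
  have hΦf : ∀ a, Φ a = f₁ (st a) := fun a => vl_inj H.irr (by rw [hlin, hv₁])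
  have hk₁ : ∀ n, τ (k n) = f₁ (τ n) := by
    intro n
    induction n using Int.induction_on with
    | zero => rw [k0, Y.tau0]; simp [hf₁]
    | succ n ih => rw [hΦ, ih, Y.tstep, f_add H hv₁, hΦf]
    | pred n ih =>
      have h1 := hΦ (-(n : ℤ) - 1)
      have h2 := Y.tstep (-(n : ℤ) - 1)
      rw [sub_add_cancel] at h1 h2
      rw [ih, h2, f_add H hv₁, hΦf] at h1
      exact (add_right_cancel h1).symm
  -- square
  have hv : ∀ p, vl ε ((f₁ ∘ f₁) p) = μ₁ ^ 2 * vl ε p := by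
    intro p; simp only [Function.comp]; rw [hv₁, hv₁]; ring
  have hc : ∀ p, vl e ((f₁ ∘ f₁) p) = L ^ 2 * vl e p := by
    intro p; simp only [Function.comp]; rw [hc₁, hc₁]; ring
  have hk : ∀ n, τ ((k ∘ k) n) = (f₁ ∘ f₁) (τ n) := by
    intro n; simp only [Function.comp]; rw [hk₁, hk₁]
  have hocc : ∀ n, occ u (substWord φ (φ (u n))) (k (k n)) ∧
      k (k n + (φ (u n)).length) = k (k n) + (substWord φ (φ (u n))).length := fun n =>
    occ_subst hstep hlet _ _ (occ_of u _ _ (hlet n))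
  have hr : ∀ n, (k ∘ k) (n + 1) = (k ∘ k) n +
      ((fun a => (substWord φ (φ a)).length) (u n) : ℕ) := by
    intro n; simp only [Function.comp]; rw [hstep n]; exact (hocc n).2
  have hW : ∀ n, ∀ i : ℕ, i < (fun a => (substWord φ (φ a)).length) (u n) →
      u ((k ∘ k) n + i) = (fun a i => (substWord φ (φ a)).getD i 0) (u n) i := fun n i hi =>
    occ_get _ _ _ (hocc n).1 i hi
  have hμ : 0 < μ₁ ^ 2 := by positivity
  have hΛ : 1 < L ^ 2 := by nlinarith
  have hμ1 : μ₁ ^ 2 < 1 := by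
    rcases lt_trichotomy (μ₁ ^ 2) 1 with h | h | h
    · exact h
    · exfalso
      have h1 : vl ε ((f₁ ∘ f₁) (1, 0)) = vl ε (1, 0) := by rw [hv, h, one_mul]
      have h2 := hc (1, 0)
      rw [vl_inj H.irr h1] at h2
      simp [vl] at h2
      nlinarith
    · exfalso
      have hb := H.c2
      have h1 : (c + l) / μ₁ ^ 2 < c + l := div_lt_self hb h
      have h2 : 0 < (c + l) / μ₁ ^ 2 := by positivity
      obtain ⟨n, q, h3, -, -⟩ := Y.dense H (x := (c + l) / μ₁ ^ 2)
        ⟨by linarith [H.c1], h1⟩ one_pos 1 one_pos 0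
      have h4 := (Y.mem ((k ∘ k) n)).2
      rw [Y.val, hk, hv, ← Y.val] at h4
      rw [div_lt_iff₀ hμ] at h3
      linarith
  have hs := f_surj (r := fun a => (substWord φ (φ a)).length)
    (W := fun a i => (substWord φ (φ a)).getD i 0) H Y hμ hμ1 hΛ hv hc hk hr hW hnd
  exact ⟨f₁ ∘ f₁, μ₁ ^ 2, L ^ 2, hμ, hμ1, hΛ, hv, hc, hs,
    fun d hd => c2_holds (r := fun a => (substWord φ (φ a)).length)
    (W := fun a i => (substWord φ (φ a)).getD i 0) H Y hμ hμ1 hΛ hv hc hk hr hW hs hd⟩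

lemma det_int {ε e μ Λ : ℝ} (hne : e ≠ ε) {f : ℤ × ℤ → ℤ × ℤ}
    (hv : ∀ p, vl ε (f p) = μ * vl ε p) (hc : ∀ p, vl e (f p) = Λ * vl e p) :
    (∃ z : ℤ, μ * Λ = z) ∧ ∃ z : ℤ, Λ + μ = z := by
  have a1 := hv (1, 0)
  have a2 := hv (0, 1)
  have b1 := hc (1, 0)
  have b2 := hc (0, 1)
  have hne' : e - ε ≠ 0 := sub_ne_zero.mpr hne
  simp only [vl] at a1 a2 b1 b2
  push_cast at a1 a2 b1 b2
  simp only [zero_mul, add_zero, mul_one, zero_add, one_mul] at a1 a2 b1 b2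
  set M := f (1, 0)
  set N := f (0, 1)
  constructor
  · refine ⟨M.1 * N.2 - M.2 * N.1, mul_left_cancel₀ hne' ?_⟩
    push_cast
    rw [← a1] at a2 ⊢
    rw [← b1] at b2 ⊢
    linear_combination (-((M.1 : ℝ) + M.2 * ε)) * b2 + ((M.1 : ℝ) + M.2 * e) * a2
  · refine ⟨M.1 + N.2, mul_left_cancel₀ hne' ?_⟩
    push_cast
    linear_combination a2 - b2 - e * a1 + ε * b1

theorem threeIet_subst_invariant_iff_unit (ε : ℝ) (A B C : ℤ) (hA : A ≠ 0)
    (hε : Irrational ε) (hεm : ε ∈ Set.Ioo (0 : ℝ) 1)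
    (hquad : (A : ℝ) * ε ^ 2 + (B : ℝ) * ε + (C : ℝ) = 0)
    (hconj : -(B : ℝ) / (A : ℝ) - ε < 0)
    (l c : ℝ) (p₁ q₁ p₂ q₂ : ℚ)
    (hcQ : c = (p₁ : ℝ) + (q₁ : ℝ) * ε) (hlQ : l = (p₂ : ℝ) + (q₂ : ℝ) * ε)
    (hl₁ : max ε (1 - ε) < l) (hl₂ : l < 1) (hc₁ : c ≤ 0) (hc₂ : 0 < c + l)
    (hnd : l ∉ Zbr ε) (u : ℤ → Fin 3) (hu : IsThreeIetWord ε l c u) :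
    (∃ φ : Fin 3 → List (Fin 3), (∀ a, φ a ≠ []) ∧ IsPrimitiveSubst φ ∧
        IsFixedPointSubstZ φ u) ↔
    ∃ p q : ℚ,
      1 < (p : ℝ) + (q : ℝ) * ε ∧
      (p : ℝ) + (q : ℝ) * (-(B : ℝ) / (A : ℝ) - ε) ∈ Set.Ioo (0 : ℝ) 1 ∧
      (((p : ℝ) + (q : ℝ) * ε) * ((p : ℝ) + (q : ℝ) * (-(B : ℝ) / (A : ℝ) - ε)) = 1 ∨
       ((p : ℝ) + (q : ℝ) * ε) * ((p : ℝ) + (q : ℝ) * (-(B : ℝ) / (A : ℝ) - ε)) = -1) ∧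
      (∃ m : ℤ, ((p : ℝ) + (q : ℝ) * ε) + ((p : ℝ) + (q : ℝ) * (-(B : ℝ) / (A : ℝ) - ε))
        = (m : ℝ)) ∧
      -- C1
      (fun z => ((p : ℝ) + (q : ℝ) * ε) * z) '' Zbr ε = Zbr ε ∧
      -- C2 : with J = Λ'[c, c+l), the ancestors of c+ε and c+l−(1−ε) in J exist and
      -- belong to {Λ'c, Λ'(c+ε), Λ'(c+l−(1−ε))}
      (let Λ' : ℝ := (p : ℝ) + (q : ℝ) * (-(B : ℝ) / (A : ℝ) - ε)
       let J : Set ℝ := Set.Ico (Λ' * c) (Λ' * (c + l))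
       (∃ z, IsAncestor ε l c J (c + ε) z ∧
          z ∈ ({Λ' * c, Λ' * (c + ε), Λ' * (c + l - (1 - ε))} : Set ℝ)) ∧
       (∃ z, IsAncestor ε l c J (c + l - (1 - ε)) z ∧
          z ∈ ({Λ' * c, Λ' * (c + ε), Λ' * (c + l - (1 - ε))} : Set ℝ))) := by
  set e : ℝ := -(B : ℝ) / (A : ℝ) - ε with he
  have hA' : (A : ℝ) ≠ 0 := by exact_mod_cast hA
  have hsum : (A : ℝ) * e = -B - A * ε := by rw [he]; field_simp
  have hquad' : (A : ℝ) * e ^ 2 + (B : ℝ) * e + (C : ℝ) = 0 := by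
    linear_combination (e - ε) * hsum + hquad
  have hirre : Irrational e := by
    have h1 : e = ((-(B : ℚ) / A : ℚ) : ℝ) - ε := by rw [he]; push_cast; ring
    rw [h1]
    exact hε.ratCast_sub _
  obtain ⟨hl3, hl4⟩ := max_lt_iff.mp hl₁
  have H : Ctx ε e l c := ⟨hε, hirre, hεm.1, hεm.2, hconj, hl3, hl4, hl₂, hc₁, hc₂⟩
  obtain ⟨t, τ, Y⟩ := exists_traj H hu
  have cm := conjmul hε hquad hquad' hA
  have hne : e ≠ ε := H.eltε.ne
  constructor
  · rintro ⟨φ, -, hφ, hfix⟩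
    obtain ⟨f, μ, Λ, hμ0, hμ1, hΛ, hv, hc, hs, hC2⟩ :=
      fwd_dir H Y p₂ q₂ hlQ hnd cm φ hφ hfix
    have hμM : (((f (1, 0)).1 : ℤ) : ℝ) + ((f (1, 0)).2 : ℤ) * ε = μ := by
      have := hv (1, 0); simpa [vl] using this
    have hΛM : (((f (1, 0)).1 : ℤ) : ℝ) + ((f (1, 0)).2 : ℤ) * e = Λ := by
      have := hc (1, 0); simpa [vl] using this
    have hp1 : ((((f (1, 0)).1 : ℚ) - (f (1, 0)).2 * B / A : ℚ) : ℝ) +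
        ((-((f (1, 0)).2 : ℚ) : ℚ) : ℝ) * ε = Λ := by
      rw [← hΛM, he]; push_cast; ring
    have hp2 : ((((f (1, 0)).1 : ℚ) - (f (1, 0)).2 * B / A : ℚ) : ℝ) +
        ((-((f (1, 0)).2 : ℚ) : ℚ) : ℝ) * e = μ := by
      rw [← hμM, he]; push_cast; ring
    refine ⟨((f (1, 0)).1 : ℚ) - (f (1, 0)).2 * B / A, -((f (1, 0)).2 : ℚ), ?_⟩
    rw [hp1, hp2]
    choose g hg using hs
    have hv' : ∀ p, vl ε (g p) = μ⁻¹ * vl ε p := by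
      intro p
      have := hv (g p)
      rw [hg] at this
      rw [this, inv_mul_cancel_left₀ hμ0.ne']
    have hc' : ∀ p, vl e (g p) = Λ⁻¹ * vl e p := by
      intro p
      have := hc (g p)
      rw [hg] at this
      rw [this, inv_mul_cancel_left₀ (by linarith)]
    obtain ⟨⟨z1, hz1⟩, z2, hz2⟩ := det_int hne hv hc
    obtain ⟨⟨z3, hz3⟩, -⟩ := det_int hne hv' hc'
    have hprod : μ * Λ = 1 := by
      have hpos : 0 < μ * Λ := mul_pos hμ0 (by linarith)
      have h1 : ((z1 * z3 : ℤ) : ℝ) = 1 := by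
        push_cast
        rw [← hz1, ← hz3, ← mul_inv]
        exact mul_inv_cancel₀ hpos.ne'
      have h2 : z1 * z3 = 1 := by exact_mod_cast h1
      have h3 : 0 < z1 := by
        rw [hz1] at hpos
        exact_mod_cast hpos
      have h4 : z1 = 1 := by
        rcases Int.eq_one_or_neg_one_of_mul_eq_one h2 with h | h <;> omega
      rw [hz1, h4]; norm_num
    refine ⟨hΛ, ⟨hμ0, hμ1⟩, Or.inl (by rw [mul_comm]; exact hprod), ⟨z2, hz2⟩, ?_,
      hC2 _ (Or.inl rfl), hC2 _ (Or.inr rfl)⟩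
    have hinv : Λ = μ⁻¹ := eq_inv_of_mul_eq_one_right hprod
    ext x
    constructor
    · rintro ⟨y, hy, rfl⟩
      obtain ⟨p, rfl⟩ := (zbr_iff y).mp hy
      exact (zbr_iff _).mpr ⟨g p, by rw [hv', hinv]⟩
    · intro hx
      obtain ⟨p, rfl⟩ := (zbr_iff x).mp hx
      refine ⟨vl ε (f p), (zbr_iff _).mpr ⟨_, rfl⟩, ?_⟩
      simp only
      rw [hv, hinv, inv_mul_cancel_left₀ hμ0.ne']
  · rintro ⟨p, q, hΛ, ⟨hμ0, hμ1⟩, hprod, -, hC1, hC2⟩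
    simp only at hC2
    have hin : ∀ s : ℤ × ℤ, ∃ x, ((p : ℝ) + (q : ℝ) * ε) * vl ε s = vl ε x := by
      intro s
      have : ((p : ℝ) + (q : ℝ) * ε) * vl ε s ∈ Zbr ε := by
        rw [← hC1]
        exact ⟨_, (zbr_iff _).mpr ⟨s, rfl⟩, rfl⟩
      exact (zbr_iff _).mp this
    have hout : ∀ s : ℤ × ℤ, ∃ x, ((p : ℝ) + (q : ℝ) * ε) * vl ε x = vl ε s := by
      intro s
      have : vl ε s ∈ (fun z => ((p : ℝ) + (q : ℝ) * ε) * z) '' Zbr ε := by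
        rw [hC1]
        exact (zbr_iff _).mpr ⟨s, rfl⟩
      obtain ⟨y, hy, h⟩ := this
      obtain ⟨x, rfl⟩ := (zbr_iff _).mp hy
      exact ⟨x, h⟩
    obtain ⟨L, hL⟩ := hin (1, 0)
    have hone : ∀ x : ℝ, vl x (1, 0) = 1 := fun x => by simp [vl]
    rw [hone, mul_one] at hL
    have hL2 : (p : ℝ) + (q : ℝ) * e = vl e L := by
      have h1 : ((p - L.1 : ℚ) : ℝ) + ((q - L.2 : ℚ) : ℝ) * ε = 0 := by
        simp only [vl] at hL
        push_cast
        linear_combination hL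
      obtain ⟨h2, h3⟩ := rat_lin_zero hε h1
      have h4 : p = L.1 := by linarith
      have h5 : q = L.2 := by linarith
      rw [h4, h5]
      simp [vl]
    have hprod' : ((p : ℝ) + (q : ℝ) * ε) * ((p : ℝ) + (q : ℝ) * e) = 1 := by
      rcases hprod with h | h
      · exact h
      · exfalso
        have := mul_pos (lt_trans one_pos hΛ) hμ0
        linarith
    choose f hf using hout
    generalize hΛd : (p : ℝ) + (q : ℝ) * ε = Λ at *
    generalize hμd : (p : ℝ) + (q : ℝ) * e = μ at *
    have hΛ0 : Λ ≠ 0 := by linarith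
    have hv : ∀ s, vl ε (f s) = μ * vl ε s := by
      intro s
      rw [← hf s, ← mul_assoc, mul_comm μ, hprod', one_mul]
    have hc : ∀ s, vl e (f s) = Λ * vl e s := by
      intro s
      have h1 := cm L (f s) s (by rw [← hL]; exact hf s)
      rw [← h1, ← hL2, ← mul_assoc, hprod', one_mul]
    refine back_dir H Y hμ0 hμ1 hΛ hv hc ?_ ?_
    · intro s
      obtain ⟨x, hx⟩ := hin s
      refine ⟨x, vl_inj hε ?_⟩
      rw [hv, ← hx, ← mul_assoc, mul_comm μ, hprod', one_mul]
    · rintro d (rfl | rfl)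
      · exact hC2.1
      · exact hC2.2
end

section
/- Let A, B, C be integers with A ≠ 0 and let ε be an irrational real number with Aε² + Bε + C = 0, and set ε′ := −B/A − ε. Then there exist rationals p, q such that, writing Λ := p + qε and Λ′ := p + qε′, one has Λ > 1, Λ′ ∈ (0,1), Λ·Λ′ = 1, Λ + Λ′ ∈ ℤ, and Λ·ℤ[ε] = ℤ[ε]; that is, there exists a quadratic unit Λ ∈ ℚ(ε) with Λ > 1, conjugate Λ′ ∈ (0,1), and Λ·ℤ[ε] = ℤ[ε]. -/
lemma Zbr_mul_mem (ε : ℝ) (A B C : ℤ)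
    (hquad : (A : ℝ) * ε ^ 2 + (B : ℝ) * ε + (C : ℝ) = 0) (x y : ℤ) (z : ℝ) (hz : z ∈ Zbr ε) :
    ((x : ℝ) + y * (2 * A * ε + B)) * z ∈ Zbr ε := by
  obtain ⟨a, b, rfl⟩ := hz
  refine ⟨a * (x + y * B) - 2 * b * y * C, 2 * a * A * y + b * (x + y * B) - 2 * y * B * b, ?_⟩
  push_cast
  linear_combination (2 * b * y : ℝ) * hquad

theorem exists_unit_preserving_Zbr (ε : ℝ) (A B C : ℤ) (hA : A ≠ 0)
    (hε : Irrational ε) (hquad : (A : ℝ) * ε ^ 2 + (B : ℝ) * ε + (C : ℝ) = 0) :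
    ∃ p q : ℚ,
      1 < (p : ℝ) + (q : ℝ) * ε ∧
      (p : ℝ) + (q : ℝ) * (-(B : ℝ) / (A : ℝ) - ε) ∈ Set.Ioo (0 : ℝ) 1 ∧
      ((p : ℝ) + (q : ℝ) * ε) * ((p : ℝ) + (q : ℝ) * (-(B : ℝ) / (A : ℝ) - ε)) = 1 ∧
      (∃ m : ℤ, ((p : ℝ) + (q : ℝ) * ε) + ((p : ℝ) + (q : ℝ) * (-(B : ℝ) / (A : ℝ) - ε))
        = (m : ℝ)) ∧
      (fun z => ((p : ℝ) + (q : ℝ) * ε) * z) '' Zbr ε = Zbr ε := by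
  have hA' : (A : ℝ) ≠ 0 := by exact_mod_cast hA
  have hs : Irrational (2 * A * ε + B) := by
    have h := (hε.intCast_mul (m := 2 * A) (by simpa using hA)).add_intCast B
    push_cast at h
    exact h
  obtain ⟨s, hsdef⟩ : ∃ s : ℝ, s = 2 * A * ε + B := ⟨_, rfl⟩
  rw [← hsdef] at hs
  have hsD : s ^ 2 = ((B ^ 2 - 4 * A * C : ℤ) : ℝ) := by
    rw [hsdef]; push_cast; linear_combination (4 * A : ℝ) * hquad
  have hs0 : s ≠ 0 := hs.ne_zero
  have hD : 0 < B ^ 2 - 4 * A * C := by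
    have : (0 : ℝ) < s ^ 2 := by positivity
    rw [hsD] at this
    exact_mod_cast this
  have hsq : ¬ IsSquare (B ^ 2 - 4 * A * C) := by
    rintro ⟨r, hr⟩
    rw [hr] at hsD
    push_cast at hsD
    rw [← sq, sq_eq_sq_iff_eq_or_eq_neg] at hsD
    rcases hsD with h | h
    · exact hs.ne_int r h
    · exact hs.ne_int (-r) (by push_cast; exact h)
  obtain ⟨a, hx, hy⟩ := Pell.Solution₁.exists_pos_of_not_isSquare hD hsq
  obtain ⟨x, y, hx1, hy0, hp⟩ : ∃ x y : ℤ, 1 < x ∧ 0 < (y : ℝ) * s ∧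
      x ^ 2 - (B ^ 2 - 4 * A * C) * y ^ 2 = 1 := by
    have hy' : (0 : ℝ) < a.y := by exact_mod_cast hy
    rcases lt_or_gt_of_ne hs0 with h | h
    · refine ⟨a.x, -a.y, hx, ?_, ?_⟩
      · push_cast; nlinarith
      · rw [neg_sq]; exact a.prop
    · exact ⟨a.x, a.y, hx, by positivity, a.prop⟩
  have hpR : (x : ℝ) ^ 2 - s ^ 2 * y ^ 2 = 1 := by rw [hsD]; exact_mod_cast hp
  have hx1' : (1 : ℝ) < x := by exact_mod_cast hx1
  have e1 : (((x + y * B : ℤ) : ℚ) : ℝ) + (((2 * A * y : ℤ) : ℚ) : ℝ) * ε = x + y * s := by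
    rw [hsdef]; push_cast; ring
  have e2 : (((x + y * B : ℤ) : ℚ) : ℝ) + (((2 * A * y : ℤ) : ℚ) : ℝ) * (-(B : ℝ) / (A : ℝ) - ε)
      = x - y * s := by
    rw [hsdef]; push_cast; field_simp; ring
  have hprod : ((x : ℝ) + y * s) * (x - y * s) = 1 := by linear_combination hpR
  refine ⟨(x + y * B : ℤ), (2 * A * y : ℤ), ?_⟩
  rw [e1, e2]
  refine ⟨by linarith, ⟨?_, ?_⟩, hprod, ⟨2 * x, by push_cast; ring⟩, ?_⟩
  · by_contra h
    push Not at h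
    nlinarith
  · nlinarith
  · apply Set.Subset.antisymm
    · rintro _ ⟨z, hz, rfl⟩
      have := Zbr_mul_mem ε A B C hquad x y z hz
      rw [← hsdef] at this
      exact this
    · intro z hz
      have := Zbr_mul_mem ε A B C hquad x (-y) z hz
      rw [← hsdef] at this
      refine ⟨_, this, ?_⟩
      push_cast
      linear_combination z * hprod
end
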